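/- Fix s ∈ (1/2, 1), a cutoff η as in the definition of I_N, and a smooth function ψ : ℝ³ → [0,1] supported in the annulus {ξ : 1/2 ≤ |ξ| ≤ 2}; for M ≥ 1 let P_M be the Fourier multiplier operator 𝓕(P_M g)(ξ) = ψ(ξ/M) 𝓕g(ξ). Then there is a constant C > 0 (depending only on s, η, ψ) such that for every T > 0, every N ≥ 1, every M ≥ 1, and every smooth decaying solution φ of the cubic defocusing NLS on [0,T] × ℝ³, ‖P_M ( I_N(φ³) )‖_{L^{10/3}_{x,t}([0,T]×ℝ³)} ≤ C M Z³, where Z = sup over Schrödinger admissible pairs (q,r) of ‖∇ I_N φ‖_{L^q_t L^r_x([0,T]×ℝ³)}. -/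

import Mathlib

open MeasureTheory Real Complex Filter
open scoped FourierTransform ContDiff ENNReal

noncomputable section

abbrev E3 := EuclideanSpace ℝ (Fin 3)

/-- the `i`-th standard basis vector of `ℝ³`. -/
def e3 (i : Fin 3) : E3 := EuclideanSpace.single i (1 : ℝ)

/-- the `i`-th spatial partial derivative. -/
def pd (g : E3 → ℂ) (i : Fin 3) (x : E3) : ℂ := fderiv ℝ g x (e3 i)

/-- the (spatial) Laplacian. -/
def lap (g : E3 → ℂ) (x : E3) : ℂ := ∑ i : Fin 3, fderiv ℝ (fun y => pd g i y) x (e3 i)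

/-- the antiderivative `F(z) = ∫₀^z f(s) ds` of `f`. -/
def Fa (f : ℝ → ℝ) (z : ℝ) : ℝ := ∫ s in (0:ℝ)..z, f s

/-- `u` is a smooth decaying solution of the gNLS `i ∂ₜ u + α Δ u = μ f(|u|²) u`
on `[0,T] × ℝ³`: it is jointly smooth, every time derivative slice is a Schwartz
function of `x`, and the equation holds pointwise on `[0,T] × ℝ³`. -/
structure IsSolution (α μ : ℝ) (f : ℝ → ℝ) (T : ℝ) (u : ℝ → E3 → ℂ) : Prop where
  smooth : ContDiff ℝ ∞ (fun p : ℝ × E3 => u p.1 p.2)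
  schwartz : ∀ (k : ℕ) (t : ℝ), ∃ g : SchwartzMap E3 ℂ,
      ∀ x, iteratedDeriv k (fun s => u s x) t = g x
  eqn : ∀ t ∈ Set.Icc (0:ℝ) T, ∀ x : E3,
      Complex.I * deriv (fun s => u s x) t + (α : ℂ) * lap (u t) x
        = ((μ * f (Complex.normSq (u t x)) : ℝ) : ℂ) * u t x

/-- the `i`-th component of the mass current `Im (conj u ∇u)`. -/
def massCur (g : E3 → ℂ) (i : Fin 3) (x : E3) : ℝ := ((starRingEnd ℂ) (g x) * pd g i x).im

/-- the Morawetz action centered at `y`. -/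
def morAction (g : E3 → ℂ) (y : E3) : ℝ :=
  ∫ x : E3, ∑ i : Fin 3, massCur g i x * ((x i - y i) / ‖x - y‖)

/-- `|∇̸_y g(x)|²`, the squared norm of the angular part of the gradient. -/
def angGradSq (g : E3 → ℂ) (y x : E3) : ℝ :=
  ∑ i : Fin 3, Complex.normSq (pd g i x -
    (((x i - y i) / ‖x - y‖ : ℝ) : ℂ) *
      ∑ j : Fin 3, (((x j - y j) / ‖x - y‖ : ℝ) : ℂ) * pd g j x)

/-- squared homogeneous Sobolev norm `‖g‖²_{Ḣ^σ}`. -/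
def sobSq (σ : ℝ) (g : E3 → ℂ) : ℝ := ∫ ξ : E3, ‖ξ‖ ^ (2 * σ) * ‖𝓕 g ξ‖ ^ 2


/-- `η` is an admissible cutoff for the smoothing operator `I_N` at regularity `s`:
a smooth nonincreasing function on `[0,∞)` with values in `(0,1]`, equal to `1` for
`r ≤ 1` and to `r^{s−1}` for `r ≥ 2`. -/
def IsCutoff (s : ℝ) (η : ℝ → ℝ) : Prop :=
  ContDiff ℝ ∞ η ∧ AntitoneOn η (Set.Ici 0) ∧ (∀ r ≥ (0:ℝ), 0 < η r ∧ η r ≤ 1) ∧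
    (∀ r ≤ (1:ℝ), η r = 1) ∧ (∀ r ≥ (2:ℝ), η r = r ^ (s - 1))

/-- the smoothing operator `I_N`, a Fourier multiplier with symbol `η(|ξ|/N)`. -/
def Iop (η : ℝ → ℝ) (N : ℝ) (g : E3 → ℂ) : E3 → ℂ :=
  fun x => 𝓕⁻ (fun ξ : E3 => (η (‖ξ‖ / N) : ℂ) * 𝓕 g ξ) x

/-- the Littlewood–Paley type projection `P_M`, a Fourier multiplier with symbol `ψ(ξ/M)`. -/
def PM (ψ : E3 → ℝ) (M : ℝ) (g : E3 → ℂ) : E3 → ℂ :=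
  fun x => 𝓕⁻ (fun ξ : E3 => (ψ (M⁻¹ • ξ) : ℂ) * 𝓕 g ξ) x

/-- pointwise norm `|∇g(x)|` of the spatial gradient. -/
def gradNorm (g : E3 → ℂ) (x : E3) : ℝ := Real.sqrt (∑ i : Fin 3, Complex.normSq (pd g i x))

/-- `(q,r)` is a Schrödinger admissible pair for `ℝ^{3+1}`: `q, r ≥ 2` and
`1/q + 3/(2r) = 3/4`. -/
def SAdmissible (q r : ℝ≥0∞) : Prop := 2 ≤ q ∧ 2 ≤ r ∧ 1 / q + 3 / (2 * r) = 3 / 4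

/-- the mixed spacetime norm `‖G‖_{L^q_t L^r_x([0,T] × ℝ³)}` (of a scalar function). -/
def LqLr (q r : ℝ≥0∞) (T : ℝ) (G : ℝ → E3 → ℝ) : ℝ≥0∞ :=
  eLpNorm (fun t => (eLpNorm (G t) r volume).toReal) q (volume.restrict (Set.Icc (0:ℝ) T))

/-- `Z = sup_{(q,r) admissible} ‖∇ I_N φ‖_{L^q_t L^r_x([0,T] × ℝ³)}`. -/
def Znorm (η : ℝ → ℝ) (N T : ℝ) (φ : ℝ → E3 → ℂ) : ℝ≥0∞ :=
  ⨆ (q : ℝ≥0∞) (r : ℝ≥0∞) (_ : SAdmissible q r),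
    LqLr q r T (fun t x => gradNorm (Iop η N (φ t)) x)

/-- the modified energy `E(w) = ∫ (1/2)|∇w|² + (1/4)|w|⁴ dx`. -/
def energyE (w : E3 → ℂ) : ℝ :=
  ∫ x : E3, (1/2) * (∑ i : Fin 3, Complex.normSq (pd w i x)) + (1/4) * ‖w x‖ ^ 4

/-- squared inhomogeneous Sobolev norm `‖g‖²_{H^s}`. -/
def inhomSobSq (s : ℝ) (g : E3 → ℂ) : ℝ :=
  ∫ ξ : E3, (1 + ‖ξ‖ ^ 2) ^ s * ‖𝓕 g ξ‖ ^ 2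


/-! At a fixed time, split `φ` smoothly at frequency `N`. The low part is controlled in `L^{10}` by
`∇ I_N φ` in `L^{30/13}` through Sobolev's inequality. A Littlewood–Paley sum controls the high part
in `L^{3q}` by `N ^ ((s - 2) / 3)` times the same quantity, for the exponent `q = 30 / (29 - 10 s)`;
the sum converges because `s > 1/2`. On the cube of the low part, `P_M I_N` is bounded on `L^{10/3}`
uniformly in `M` and `N`. On the cube of the high part it is bounded from `L^q` to `L^{10/3}` with
norm `≲ M ^ (2 - s) (N / M) ^ (1 - s)`, since the symbol of `I_N` is `≲ (N / |ξ|) ^ (1 - s)`, and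
the powers of `M` and `N` combine to `M / N`. Integrating in time, the `L^{10/3}` norm of a cube is
the cube of an `L^{10}` norm, and `(10, 30/13)` is an admissible pair. -/

open SchwartzMap
open scoped SchwartzMap Topology NNReal

section TemperateGrowth

lemma hasTemperateGrowth_of_eventually_cocompact {E F : Type*} [NormedAddCommGroup E]
    [NormedSpace ℝ E] [NormedAddCommGroup F] [NormedSpace ℝ F] {f : E → F}
    (hf : ContDiff ℝ ∞ f)
    (h : ∀ n, ∃ (k : ℕ) (C : ℝ), ∀ᶠ x in cocompact E,
      ‖iteratedFDeriv ℝ n f x‖ ≤ C * (1 + ‖x‖) ^ k) :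
    f.HasTemperateGrowth := by
  refine ⟨hf, fun n => ?_⟩
  obtain ⟨k, C, hC⟩ := h n
  obtain ⟨K, hK, hKC⟩ := mem_cocompact.1 hC
  obtain ⟨B, hB⟩ := hK.exists_bound_of_continuousOn
    (hf.continuous_iteratedFDeriv (m := n) (mod_cast le_top)).continuousOn
  refine ⟨k, max B C, fun x => ?_⟩
  have hx : 1 ≤ (1 + ‖x‖) ^ k := one_le_pow₀ (by simp)
  by_cases hxK : x ∈ K
  · have hB0 : 0 ≤ B := (norm_nonneg _).trans (hB x hxK)
    calc ‖iteratedFDeriv ℝ n f x‖ ≤ B * 1 := by simpa using hB x hxK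
      _ ≤ max B C * (1 + ‖x‖) ^ k := by gcongr; exact le_max_left B C
  · calc ‖iteratedFDeriv ℝ n f x‖ ≤ C * (1 + ‖x‖) ^ k := hKC hxK
      _ ≤ max B C * (1 + ‖x‖) ^ k := by gcongr; exact le_max_right B C

lemma norm_iteratedFDeriv_rpow_const_le (a : ℝ) (n : ℕ) {x : ℝ} (hx : 1 ≤ x) :
    ‖iteratedFDeriv ℝ n (fun u : ℝ => u ^ a) x‖ ≤
      |(descPochhammer ℝ n).eval a| * (1 + ‖x‖) ^ ⌈|a|⌉₊ := by
  rw [norm_iteratedFDeriv_eq_norm_iteratedDeriv, iteratedDeriv_eq_iterate,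
    Real.iter_deriv_rpow_const, norm_mul, Real.norm_eq_abs]
  gcongr
  rw [Real.norm_of_nonneg (by positivity), Real.norm_of_nonneg (by linarith), ← Real.rpow_natCast]
  calc x ^ (a - n) ≤ x ^ (⌈|a|⌉₊ : ℝ) :=
        Real.rpow_le_rpow_of_exponent_le hx
          ((sub_le_self a n.cast_nonneg).trans ((le_abs_self a).trans (Nat.le_ceil _)))
    _ ≤ (1 + x) ^ (⌈|a|⌉₊ : ℝ) := by gcongr; linarith

lemma hasTemperateGrowth_of_eventuallyEq_rpow {f : ℝ → ℝ} {a c : ℝ} (hf : ContDiff ℝ ∞ f)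
    (hbot : f =ᶠ[atBot] fun _ => c) (htop : f =ᶠ[atTop] fun u => u ^ a) :
    f.HasTemperateGrowth := by
  refine hasTemperateGrowth_of_eventually_cocompact hf fun n =>
    ⟨⌈|a|⌉₊, max |c| |(descPochhammer ℝ n).eval a|, ?_⟩
  rw [cocompact_eq_atBot_atTop, eventually_sup]
  constructor
  · obtain ⟨b, hb⟩ := eventually_atBot.1 hbot
    filter_upwards [eventually_lt_atBot b] with u hu
    have hfu : f =ᶠ[𝓝 u] fun _ => c := by
      filter_upwards [gt_mem_nhds hu] with v hv using hb v (le_of_lt hv)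
    calc ‖iteratedFDeriv ℝ n f u‖ = ‖iteratedFDeriv ℝ n (fun _ : ℝ => c) u‖ := by
          rw [(hfu.iteratedFDeriv ℝ n).eq_of_nhds]
      _ ≤ |c| * 1 := by rcases n with _ | n <;> simp [iteratedFDeriv_succ_const]
      _ ≤ _ := by gcongr; exacts [le_max_left _ _, one_le_pow₀ (by simp)]
  · obtain ⟨b, hb⟩ := eventually_atTop.1 htop
    filter_upwards [eventually_gt_atTop b, eventually_ge_atTop 1] with u hu hu1
    have hfu : f =ᶠ[𝓝 u] fun v => v ^ a := by
      filter_upwards [lt_mem_nhds hu] with v hv using hb v (le_of_lt hv)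
    rw [(hfu.iteratedFDeriv ℝ n).eq_of_nhds]
    refine (norm_iteratedFDeriv_rpow_const_le a n hu1).trans ?_
    gcongr
    exact le_max_right _ _

end TemperateGrowth

/-- The radial symbol `ξ ↦ η(|ξ|)`, whose dilation by `N` is the symbol of `I_N`. -/
def cutoffSymbol {V : Type*} [Norm V] (η : ℝ → ℝ) (ξ : V) : ℂ := η ‖ξ‖

namespace IsCutoff

variable {s : ℝ} {η : ℝ → ℝ}

lemma contDiff_comp_sqrt (hη : IsCutoff s η) : ContDiff ℝ ∞ fun u => η √u := by
  obtain ⟨hsm, -, -, hone, -⟩ := hη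
  refine contDiff_iff_contDiffAt.2 fun u => ?_
  rcases lt_or_ge u 1 with hu | hu
  · have : (fun u => η √u) =ᶠ[𝓝 u] fun _ => 1 := by
      filter_upwards [gt_mem_nhds hu] with v hv
      exact hone _ (Real.sqrt_le_one.2 (le_of_lt hv))
    exact contDiffAt_const.congr_of_eventuallyEq this
  · exact hsm.contDiffAt.comp u (Real.contDiffAt_sqrt (by linarith))

lemma hasTemperateGrowth_comp_sqrt (hη : IsCutoff s η) :
    (fun u => η √u).HasTemperateGrowth := by
  obtain ⟨-, -, -, hone, hpow⟩ := id hη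
  refine hasTemperateGrowth_of_eventuallyEq_rpow (a := (s - 1) / 2) (c := 1)
    hη.contDiff_comp_sqrt ?_ ?_
  · filter_upwards [eventually_le_atBot 1] with u hu using hone _ (Real.sqrt_le_one.2 hu)
  · filter_upwards [eventually_ge_atTop 4] with u hu
    rw [hpow _ (Real.le_sqrt_of_sq_le (by linarith)), Real.sqrt_eq_rpow,
      ← Real.rpow_mul (by linarith), one_div_mul_eq_div]

lemma hasTemperateGrowth_cutoffSymbol {V : Type*} [NormedAddCommGroup V]
    [InnerProductSpace ℝ V] (hη : IsCutoff s η) :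
    (cutoffSymbol η : V → ℂ).HasTemperateGrowth := by
  have h := Complex.ofRealCLM.hasTemperateGrowth.comp
    (hη.hasTemperateGrowth_comp_sqrt.comp (Function.hasTemperateGrowth_norm_sq V))
  have heq : (cutoffSymbol η : V → ℂ) =
      ⇑Complex.ofRealCLM ∘ (fun u => η √u) ∘ fun x => ‖x‖ ^ 2 := by
    funext ξ
    simp [cutoffSymbol]
  rwa [heq]

variable {V : Type*} [NormedAddCommGroup V]

lemma cutoffSymbol_of_two_le_norm (hη : IsCutoff s η) {ξ : V} (hξ : 2 ≤ ‖ξ‖) :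
    cutoffSymbol η ξ = (‖ξ‖ ^ (s - 1) : ℝ) := by
  rw [cutoffSymbol, hη.2.2.2.2 _ hξ]

lemma cutoffSymbol_ne_zero (hη : IsCutoff s η) (ξ : V) : cutoffSymbol η ξ ≠ 0 :=
  Complex.ofReal_ne_zero.2 (hη.2.2.1 _ (norm_nonneg ξ)).1.ne'

lemma exists_schwartzMap_mul_cutoffSymbol_eq [InnerProductSpace ℝ V] (hη : IsCutoff s η)
    {b : V → ℂ} (hb : ContDiff ℝ ∞ b) (hbc : HasCompactSupport b) :
    ∃ m : 𝓢(V, ℂ), ⇑m * cutoffSymbol η = b := by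
  have hsmooth : ContDiff ℝ ∞ fun ξ : V => b ξ * (cutoffSymbol η ξ)⁻¹ :=
    hb.mul (hη.hasTemperateGrowth_cutoffSymbol.1.inv hη.cutoffSymbol_ne_zero)
  refine ⟨HasCompactSupport.toSchwartzMap hbc.mul_right hsmooth, funext fun ξ => ?_⟩
  exact inv_mul_cancel_right₀ (hη.cutoffSymbol_ne_zero ξ) (b ξ)

end IsCutoff

section Young

variable {G : Type*} [AddCommGroup G] [MeasurableSpace G] [MeasurableAdd₂ G] [MeasurableNeg G]
  {μ : Measure G} [μ.IsAddLeftInvariant] {k g : G → ℝ≥0∞}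

lemma lintegral_lconvolution [SFinite μ] (hk : Measurable k) (hg : Measurable g) :
    ∫⁻ x, (k ⋆ₗ[μ] g) x ∂μ = (∫⁻ x, k x ∂μ) * ∫⁻ x, g x ∂μ := by
  simp only [lconvolution_def]
  rw [lintegral_lintegral_swap (by fun_prop)]
  calc ∫⁻ y, ∫⁻ x, k y * g (-y + x) ∂μ ∂μ = ∫⁻ y, k y * ∫⁻ x, g x ∂μ ∂μ := by
        refine lintegral_congr fun y => ?_
        rw [lintegral_const_mul _ (by fun_prop), lintegral_add_left_eq_self]
    _ = (∫⁻ x, k x ∂μ) * ∫⁻ x, g x ∂μ := lintegral_mul_const _ hk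

variable {p q r : ℝ}

lemma mul_eq_rpow_mul_rpow_mul_rpow (hp : 0 < p) (hq : 0 < q) (hr : 0 < r)
    (hpr : 1 / r ≤ 1 / p) (hqr : 1 / r ≤ 1 / q) (a b : ℝ≥0∞) :
    a * b = (a ^ p * b ^ q) ^ (1 / r) * (a ^ p) ^ (1 / p - 1 / r) * (b ^ q) ^ (1 / q - 1 / r) := by
  have split {t : ℝ} (ht : 0 < t) (htr : 1 / r ≤ 1 / t) (c : ℝ≥0∞) :
      c = (c ^ t) ^ (1 / r) * (c ^ t) ^ (1 / t - 1 / r) := by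
    rw [← ENNReal.rpow_add_of_nonneg _ _ (by positivity) (by linarith), add_sub_cancel,
      ← ENNReal.rpow_mul, mul_one_div_cancel ht.ne', ENNReal.rpow_one]
  rw [ENNReal.mul_rpow_of_nonneg _ _ (by positivity)]
  nth_rw 1 [split hp hpr a, split hq hqr b]
  ring

lemma lconvolution_le_rpow_lconvolution_rpow [μ.IsNegInvariant] (hp : 0 < p) (hq : 0 < q)
    (hr : 0 < r) (hpr : 1 / r ≤ 1 / p) (hqr : 1 / r ≤ 1 / q) (hpqr : 1 / p + 1 / q = 1 + 1 / r)
    (hk : Measurable k) (hg : Measurable g) (x : G) :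
    (k ⋆ₗ[μ] g) x ≤ (((fun y => k y ^ p) ⋆ₗ[μ] fun y => g y ^ q) x) ^ (1 / r) *
      (∫⁻ y, k y ^ p ∂μ) ^ (1 / p - 1 / r) * (∫⁻ y, g y ^ q ∂μ) ^ (1 / q - 1 / r) := by
  have hgx : ∫⁻ y, g (-y + x) ^ q ∂μ = ∫⁻ y, g y ^ q ∂μ := by
    simpa only [sub_eq_neg_add] using lintegral_sub_left_eq_self (fun y => g y ^ q) x
  have holder := ENNReal.lintegral_prod_norm_pow_le (μ := μ) (Finset.univ : Finset (Fin 3))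
    (f := ![fun y => k y ^ p * g (-y + x) ^ q, fun y => k y ^ p, fun y => g (-y + x) ^ q])
    (p := ![1 / r, 1 / p - 1 / r, 1 / q - 1 / r])
    (fun i _ => by fin_cases i <;> dsimp <;> fun_prop)
    (by rw [Fin.sum_univ_three]; dsimp; linarith)
    (fun i _ => by fin_cases i <;> dsimp <;> positivity)
  simp only [Fin.prod_univ_three, Matrix.cons_val_zero, Matrix.cons_val_one, Matrix.cons_val,
    hgx] at holder
  refine le_trans (lintegral_mono fun y => ?_) holder
  exact (mul_eq_rpow_mul_rpow_mul_rpow hp hq hr hpr hqr _ _).le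

lemma lintegral_lconvolution_rpow_le [μ.IsNegInvariant] [SFinite μ] (hp : 0 < p) (hq : 0 < q)
    (hr : 0 < r) (hpr : 1 / r ≤ 1 / p) (hqr : 1 / r ≤ 1 / q) (hpqr : 1 / p + 1 / q = 1 + 1 / r)
    (hk : Measurable k) (hg : Measurable g) :
    (∫⁻ x, (k ⋆ₗ[μ] g) x ^ r ∂μ) ^ (1 / r) ≤
      (∫⁻ x, k x ^ p ∂μ) ^ (1 / p) * (∫⁻ x, g x ^ q ∂μ) ^ (1 / q) := by
  set A := ∫⁻ x, k x ^ p ∂μ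
  set B := ∫⁻ x, g x ^ q ∂μ
  set c := A ^ (1 / p - 1 / r) * B ^ (1 / q - 1 / r)
  have hkg : Measurable ((fun y => k y ^ p) ⋆ₗ[μ] fun y => g y ^ q) := by fun_prop
  have hpow (x : G) : (k ⋆ₗ[μ] g) x ^ r ≤
      ((fun y => k y ^ p) ⋆ₗ[μ] fun y => g y ^ q) x * c ^ r := by
    refine (ENNReal.rpow_le_rpow (lconvolution_le_rpow_lconvolution_rpow hp hq hr hpr hqr hpqr
      hk hg x) hr.le).trans_eq ?_
    rw [mul_assoc, ENNReal.mul_rpow_of_nonneg _ _ hr.le, ← ENNReal.rpow_mul,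
      one_div_mul_cancel hr.ne', ENNReal.rpow_one]
  have split {t : ℝ} (htr : 1 / r ≤ 1 / t) (a : ℝ≥0∞) :
      a ^ (1 / r) * a ^ (1 / t - 1 / r) = a ^ (1 / t) := by
    rw [← ENNReal.rpow_add_of_nonneg _ _ (by positivity) (by linarith), add_sub_cancel]
  calc (∫⁻ x, (k ⋆ₗ[μ] g) x ^ r ∂μ) ^ (1 / r) ≤ (A * B * c ^ r) ^ (1 / r) := by
        rw [← lintegral_lconvolution (by fun_prop) (by fun_prop), ← lintegral_mul_const _ hkg]
        exact ENNReal.rpow_le_rpow (lintegral_mono hpow) (by positivity)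
    _ = (A ^ (1 / r) * A ^ (1 / p - 1 / r)) * (B ^ (1 / r) * B ^ (1 / q - 1 / r)) := by
        rw [ENNReal.mul_rpow_of_nonneg _ _ (by positivity), ← ENNReal.rpow_mul,
          mul_one_div_cancel hr.ne', ENNReal.rpow_one,
          ENNReal.mul_rpow_of_nonneg _ _ (by positivity)]
        ring
    _ = A ^ (1 / p) * B ^ (1 / q) := by rw [split hpr, split hqr]

lemma toReal_inv_add_toReal_inv {p q r : ℝ≥0∞} (hp : 1 ≤ p) (hq : 1 ≤ q)
    (hpqr : p⁻¹ + q⁻¹ = 1 + r⁻¹) : p.toReal⁻¹ + q.toReal⁻¹ = 1 + r.toReal⁻¹ := by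
  have hp1 : p⁻¹ ≠ ⊤ := ENNReal.inv_ne_top.2 (zero_lt_one.trans_le hp).ne'
  have hq1 : q⁻¹ ≠ ⊤ := ENNReal.inv_ne_top.2 (zero_lt_one.trans_le hq).ne'
  have hr1 : r⁻¹ ≠ ⊤ :=
    ne_top_of_le_ne_top (hpqr ▸ ENNReal.add_ne_top.2 ⟨hp1, hq1⟩) le_add_self
  simpa [ENNReal.toReal_add, hp1, hq1, hr1] using congrArg ENNReal.toReal hpqr

lemma exists_inv_add_inv_eq_one_add_inv {q r : ℝ≥0∞} (hq : 1 ≤ q) (hqr : q ≤ r) (hr : r ≠ ⊤) :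
    ∃ p : ℝ≥0∞, 1 ≤ p ∧ p ≠ ⊤ ∧ p⁻¹ + q⁻¹ = 1 + r⁻¹ := by
  have hq1 : q⁻¹ ≤ 1 := ENNReal.inv_le_one.2 hq
  refine ⟨(1 + r⁻¹ - q⁻¹)⁻¹, ?_, ?_, ?_⟩
  · rw [ENNReal.one_le_inv, tsub_le_iff_right]
    gcongr
  · rw [Ne, ENNReal.inv_eq_top, tsub_eq_zero_iff_le, not_le]
    exact hq1.trans_lt (ENNReal.lt_add_right ENNReal.one_ne_top (ENNReal.inv_ne_zero.2 hr))
  · rw [inv_inv, tsub_add_cancel_of_le (hq1.trans le_self_add)]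

/-- **Young's convolution inequality**. -/
theorem eLpNorm_lconvolution_le [μ.IsNegInvariant] [SFinite μ] {p q r : ℝ≥0∞} (hp : 1 ≤ p)
    (hq : 1 ≤ q) (hr : r ≠ ⊤) (hpqr : p⁻¹ + q⁻¹ = 1 + r⁻¹) (hk : Measurable k)
    (hg : Measurable g) :
    eLpNorm (k ⋆ₗ[μ] g) r μ ≤ eLpNorm k p μ * eLpNorm g q μ := by
  have hp1 : p⁻¹ ≤ 1 := ENNReal.inv_le_one.2 hp
  have hq1 : q⁻¹ ≤ 1 := ENNReal.inv_le_one.2 hq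
  have hrp : r⁻¹ ≤ p⁻¹ :=
    (ENNReal.add_le_add_iff_right ENNReal.one_ne_top).1 (by rw [add_comm, ← hpqr]; gcongr)
  have hrq : r⁻¹ ≤ q⁻¹ :=
    (ENNReal.add_le_add_iff_left ENNReal.one_ne_top).1 (by rw [← hpqr]; gcongr)
  have hp0 : p ≠ 0 := (zero_lt_one.trans_le hp).ne'
  have hq0 : q ≠ 0 := (zero_lt_one.trans_le hq).ne'
  have hr0 : r ≠ 0 := ENNReal.inv_ne_top.1 (ne_top_of_le_ne_top ENNReal.one_ne_top (hrp.trans hp1))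
  have hpt : p ≠ ⊤ := ne_top_of_le_ne_top hr (ENNReal.inv_le_inv.1 hrp)
  have hqt : q ≠ ⊤ := ne_top_of_le_ne_top hr (ENNReal.inv_le_inv.1 hrq)
  have hrp' := ENNReal.toReal_mono (ENNReal.inv_ne_top.2 hp0) hrp
  have hrq' := ENNReal.toReal_mono (ENNReal.inv_ne_top.2 hq0) hrq
  have hpqr' := toReal_inv_add_toReal_inv hp hq hpqr
  simp only [ENNReal.toReal_inv] at hrp' hrq'
  simp only [← one_div] at hrp' hrq' hpqr'
  simp only [eLpNorm_eq_lintegral_rpow_enorm_toReal hp0 hpt,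
    eLpNorm_eq_lintegral_rpow_enorm_toReal hq0 hqt, eLpNorm_eq_lintegral_rpow_enorm_toReal hr0 hr,
    enorm_eq_self]
  exact lintegral_lconvolution_rpow_le (ENNReal.toReal_pos hp0 hpt) (ENNReal.toReal_pos hq0 hqt)
    (ENNReal.toReal_pos hr0 hr) hrp' hrq' hpqr' hk hg

end Young

section Dilation

variable {V : Type*} [NormedAddCommGroup V]

/-- The symbol `ξ ↦ m (ξ / L)`, that is, `m` rescaled from unit frequency to frequency `L`. -/
def dilate [NormedSpace ℝ V] (L : ℝ) (m : V → ℂ) : V → ℂ := fun ξ => m (L⁻¹ • ξ)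

lemma hasTemperateGrowth_dilate [NormedSpace ℝ V] {m : V → ℂ} (hm : m.HasTemperateGrowth) (L : ℝ) :
    (dilate L m).HasTemperateGrowth :=
  hm.comp (L⁻¹ • ContinuousLinearMap.id ℝ V).hasTemperateGrowth

lemma exists_schwartzMap_coe_eq_dilate [NormedSpace ℝ V] (m : 𝓢(V, ℂ)) {L : ℝ} (hL : 0 < L) :
    ∃ n : 𝓢(V, ℂ), ⇑n = dilate L m :=
  ⟨compCLMOfContinuousLinearEquiv ℂ
    (ContinuousLinearEquiv.smulLeft (Units.mk0 L⁻¹ (inv_ne_zero hL.ne'))) m, rfl⟩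

variable [InnerProductSpace ℝ V] [FiniteDimensional ℝ V] [MeasurableSpace V] [BorelSpace V]

local notation "d" => Module.finrank ℝ V

lemma fourierInv_dilate (m : V → ℂ) {L : ℝ} (hL : 0 < L) :
    𝓕⁻ (dilate L m) = fun x => L ^ d • 𝓕⁻ m (L • x) := by
  funext x
  have hcomp := Measure.integral_comp_inv_smul volume
    (fun ξ : V => Complex.exp (↑(2 * π * inner ℝ ξ (L • x)) * Complex.I) • m ξ) L
  rw [abs_of_nonneg (by positivity)] at hcomp
  rw [Real.fourierInv_eq', Real.fourierInv_eq', ← hcomp]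
  refine integral_congr_ae (ae_of_all _ fun ξ => ?_)
  simp only [dilate, inner_smul_left, inner_smul_right, conj_trivial, mul_inv_cancel_left₀ hL.ne']

lemma eLpNorm_comp_smul {F : Type*} [NormedAddCommGroup F] (f : V → F) (p : ℝ≥0∞) {L : ℝ}
    (hL : 0 < L) :
    eLpNorm (fun x => f (L • x)) p volume =
      ENNReal.ofReal (L ^ (-(d * p.toReal⁻¹))) * eLpNorm f p volume := by
  have hLd : 0 < (L ^ d)⁻¹ := by positivity
  have hemb : MeasurableEmbedding fun x : V => L • x :=
    (Homeomorph.smulOfNeZero L hL.ne').measurableEmbedding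
  change eLpNorm (f ∘ fun x => L • x) p volume = _
  rw [← hemb.eLpNorm_map_measure, Measure.map_addHaar_smul _ hL.ne', abs_of_pos hLd,
    eLpNorm_smul_measure_of_ne_zero (ENNReal.ofReal_pos.2 hLd).ne', smul_eq_mul,
    ENNReal.ofReal_rpow_of_pos hLd, ← Real.rpow_natCast, ← Real.rpow_neg hL.le,
    ← Real.rpow_mul hL.le]
  simp

lemma eLpNorm_fourierInv_dilate (m : V → ℂ) (p : ℝ≥0∞) {L : ℝ} (hL : 0 < L) :
    eLpNorm (𝓕⁻ (dilate L m)) p volume =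
      ENNReal.ofReal (L ^ (d * (1 - p.toReal⁻¹))) * eLpNorm (𝓕⁻ m) p volume := by
  rw [fourierInv_dilate m hL]
  change eLpNorm (L ^ d • fun x => 𝓕⁻ m (L • x)) p volume = _
  rw [eLpNorm_const_smul, eLpNorm_comp_smul _ _ hL, ← mul_assoc,
    Real.enorm_of_nonneg (by positivity), ← ENNReal.ofReal_mul (by positivity),
    ← Real.rpow_natCast, ← Real.rpow_add hL]
  ring_nf

end Dilation

section Multiplier

variable {V : Type*} [NormedAddCommGroup V] [InnerProductSpace ℝ V] [FiniteDimensional ℝ V]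
  [MeasurableSpace V] [BorelSpace V]

local notation "d" => Module.finrank ℝ V

lemma fourierMultiplierCLM_apply_eq_fourierInv {m : V → ℂ} (hm : m.HasTemperateGrowth)
    (f : 𝓢(V, ℂ)) :
    ⇑(fourierMultiplierCLM ℂ m f) = 𝓕⁻ fun ξ => m ξ * 𝓕 (f : V → ℂ) ξ := by
  rw [fourierMultiplierCLM_apply, fourierInv_coe, ← fourier_coe]
  congr 1
  funext ξ
  rw [smulLeftCLM_apply_apply hm, smul_eq_mul]

lemma fourierMultiplierCLM_eq_convolution (m f : 𝓢(V, ℂ)) :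
    fourierMultiplierCLM ℂ m f =
      SchwartzMap.convolution (ContinuousLinearMap.mul ℂ ℂ) (𝓕⁻ m) f := by
  rw [← FourierTransform.fourierInv_fourier_eq (F := 𝓢(V, ℂ))
    (SchwartzMap.convolution (ContinuousLinearMap.mul ℂ ℂ) (𝓕⁻ m) f), fourier_convolution,
    FourierTransform.fourier_fourierInv_eq, fourierMultiplierCLM_apply]
  congr 1
  ext ξ
  simp [smulLeftCLM_apply_apply m.hasTemperateGrowth]

lemma enorm_fourierMultiplierCLM_apply_le (m f : 𝓢(V, ℂ)) (x : V) :
    ‖fourierMultiplierCLM ℂ m f x‖ₑ ≤ ((fun y => ‖(𝓕⁻ m) y‖ₑ) ⋆ₗ fun y => ‖f y‖ₑ) x := by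
  rw [fourierMultiplierCLM_eq_convolution, SchwartzMap.convolution_apply]
  refine (enorm_integral_le_lintegral_enorm _).trans_eq (lintegral_congr fun y => ?_)
  rw [ContinuousLinearMap.mul_apply', enorm_mul, sub_eq_neg_add]

lemma eLpNorm_fourierMultiplierCLM_le_add (m f : 𝓢(V, ℂ)) {g₁ g₂ : V → ℝ≥0∞}
    (hg₁ : Measurable g₁) (hg₂ : Measurable g₂) (hf : ∀ x, ‖f x‖ₑ ≤ g₁ x + g₂ x)
    {p₁ q₁ p₂ q₂ r : ℝ≥0∞} (hp₁ : 1 ≤ p₁) (hq₁ : 1 ≤ q₁) (hp₂ : 1 ≤ p₂) (hq₂ : 1 ≤ q₂)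
    (hr1 : 1 ≤ r) (hr : r ≠ ⊤) (h₁ : p₁⁻¹ + q₁⁻¹ = 1 + r⁻¹) (h₂ : p₂⁻¹ + q₂⁻¹ = 1 + r⁻¹) :
    eLpNorm (fourierMultiplierCLM ℂ m f) r volume ≤
      eLpNorm (𝓕⁻ (m : V → ℂ)) p₁ volume * eLpNorm g₁ q₁ volume +
        eLpNorm (𝓕⁻ (m : V → ℂ)) p₂ volume * eLpNorm g₂ q₂ volume := by
  set k : V → ℝ≥0∞ := fun y => ‖(𝓕⁻ m) y‖ₑ
  have hk : Measurable k := (𝓕⁻ m).continuous.measurable.enorm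
  have hknorm (p : ℝ≥0∞) : eLpNorm k p volume = eLpNorm (𝓕⁻ (m : V → ℂ)) p volume := by
    rw [← fourierInv_coe, ← eLpNorm_enorm ⇑(𝓕⁻ m : 𝓢(V, ℂ))]
  have hmaj (x : V) : ‖fourierMultiplierCLM ℂ m f x‖ₑ ≤ (k ⋆ₗ g₁ + k ⋆ₗ g₂) x := by
    refine (enorm_fourierMultiplierCLM_apply_le m f x).trans ?_
    simp only [Pi.add_apply, lconvolution_def]
    rw [← lintegral_add_left (by fun_prop)]
    gcongr with y
    rw [← mul_add]
    gcongr
    exact hf _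
  calc eLpNorm (fourierMultiplierCLM ℂ m f) r volume ≤ eLpNorm (k ⋆ₗ g₁ + k ⋆ₗ g₂) r volume :=
        eLpNorm_mono_enorm hmaj
    _ ≤ eLpNorm (k ⋆ₗ g₁) r volume + eLpNorm (k ⋆ₗ g₂) r volume :=
        eLpNorm_add_le (by fun_prop) (by fun_prop) hr1
    _ ≤ _ := by
        rw [← hknorm, ← hknorm]
        gcongr
        exacts [eLpNorm_lconvolution_le hp₁ hq₁ hr h₁ hk hg₁,
          eLpNorm_lconvolution_le hp₂ hq₂ hr h₂ hk hg₂]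

lemma eLpNorm_fourierMultiplierCLM_le (m f : 𝓢(V, ℂ)) {p q r : ℝ≥0∞} (hp : 1 ≤ p) (hq : 1 ≤ q)
    (hr : r ≠ ⊤) (hpqr : p⁻¹ + q⁻¹ = 1 + r⁻¹) :
    eLpNorm (fourierMultiplierCLM ℂ m f) r volume ≤
      eLpNorm (𝓕⁻ (m : V → ℂ)) p volume * eLpNorm f q volume := by
  rw [← fourierInv_coe, ← eLpNorm_enorm ⇑(𝓕⁻ m : 𝓢(V, ℂ)), ← eLpNorm_enorm ⇑f]
  exact (eLpNorm_mono_enorm (enorm_fourierMultiplierCLM_apply_le m f)).trans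
    (eLpNorm_lconvolution_le hp hq hr hpqr (𝓕⁻ m).continuous.measurable.enorm
      f.continuous.measurable.enorm)

/-- **Bernstein's inequality** for frequency localization at scale `L`. -/
lemma exists_eLpNorm_fourierMultiplierCLM_dilate_le (m : 𝓢(V, ℂ)) {q r : ℝ≥0∞} (hq : 1 ≤ q)
    (hqr : q ≤ r) (hr : r ≠ ⊤) :
    ∃ C : ℝ≥0, ∀ L > 0, ∀ f : 𝓢(V, ℂ),
      eLpNorm (fourierMultiplierCLM ℂ (dilate L m) f) r volume ≤
        C * ENNReal.ofReal (L ^ (d * (q.toReal⁻¹ - r.toReal⁻¹))) * eLpNorm f q volume := by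
  obtain ⟨p, hp, -, hpqr⟩ := exists_inv_add_inv_eq_one_add_inv hq hqr hr
  have hfin : eLpNorm (𝓕⁻ (m : V → ℂ)) p volume ≠ ⊤ := by
    rw [← fourierInv_coe]
    exact ((𝓕⁻ m).memLp p volume).eLpNorm_ne_top
  refine ⟨(eLpNorm (𝓕⁻ (m : V → ℂ)) p volume).toNNReal, fun L hL f => ?_⟩
  obtain ⟨n, hn⟩ := exists_schwartzMap_coe_eq_dilate m hL
  have hexp : 1 - p.toReal⁻¹ = q.toReal⁻¹ - r.toReal⁻¹ := by
    linarith [toReal_inv_add_toReal_inv hp hq hpqr]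
  rw [ENNReal.coe_toNNReal hfin, mul_comm (eLpNorm _ _ _), ← hexp,
    ← eLpNorm_fourierInv_dilate _ _ hL, ← hn]
  exact eLpNorm_fourierMultiplierCLM_le n f hp hq hr hpqr

lemma tendsto_fourierMultiplierCLM_dilate (m f : 𝓢(V, ℂ)) {ι : Type*} {l : Filter ι}
    [l.IsCountablyGenerated] {L : ι → ℝ} (hL : Tendsto L l atTop) (x : V) :
    Tendsto (fun i => fourierMultiplierCLM ℂ (dilate (L i) m) f x) l (𝓝 (m 0 * f x)) := by
  have hfx : m 0 * f x = 𝓕⁻ (fun ξ => m 0 * 𝓕 f ξ) x := by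
    have := congrFun (fourierMultiplierCLM_apply_eq_fourierInv (.const (m 0)) f) x
    rw [fourierMultiplierCLM_const] at this
    simpa [fourier_coe] using this
  simp_rw [fourierMultiplierCLM_apply_eq_fourierInv
    (hasTemperateGrowth_dilate m.hasTemperateGrowth _), hfx, ← fourier_coe, Real.fourierInv_eq']
  obtain ⟨B, hB⟩ : ∃ B, ∀ ξ, ‖m ξ‖ ≤ B := ⟨_, norm_le_seminorm ℝ m⟩
  refine tendsto_integral_filter_of_dominated_convergence (fun ξ => B * ‖𝓕 f ξ‖)
    (.of_forall fun i => ?_) (.of_forall fun i => .of_forall fun ξ => ?_)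
    ((𝓕 f).integrable.norm.const_mul B) (.of_forall fun ξ => ?_)
  · have := m.continuous
    have := (𝓕 f).continuous
    unfold dilate
    exact Continuous.aestronglyMeasurable (by fun_prop)
  · rw [norm_smul, norm_mul, Complex.norm_exp_ofReal_mul_I, one_mul]
    exact mul_le_mul_of_nonneg_right (hB _) (norm_nonneg _)
  · have hξ : Tendsto (fun i => (L i)⁻¹ • ξ) l (𝓝 0) := by
      simpa using (tendsto_inv_atTop_zero.comp hL).smul_const ξ
    exact (((m.continuous.tendsto 0).comp hξ).mul_const _).const_smul _

end Multiplier

section AnnularSymbol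

/-- A smooth symbol supported in a compact set of frequencies avoiding the origin, as in a
Littlewood–Paley projection. -/
structure IsAnnularSymbol {V : Type*} [NormedAddCommGroup V] [NormedSpace ℝ V] (b : V → ℂ) :
    Prop where
  contDiff : ContDiff ℝ ∞ b
  hasCompactSupport : HasCompactSupport b
  zero_notMem_tsupport : (0 : V) ∉ tsupport b

namespace IsAnnularSymbol

lemma of_support_subset {V : Type*} [NormedAddCommGroup V] [NormedSpace ℝ V] [ProperSpace V]
    {b : V → ℂ} (hb : ContDiff ℝ ∞ b) {r R : ℝ} (hr : 0 < r)
    (hsupp : Function.support b ⊆ {ξ | r ≤ ‖ξ‖ ∧ ‖ξ‖ ≤ R}) : IsAnnularSymbol b where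
  contDiff := hb
  hasCompactSupport := HasCompactSupport.intro (isCompact_closedBall 0 R) fun ξ hξ => by
    contrapose! hξ
    exact mem_closedBall_zero_iff.2 (hsupp hξ).2
  zero_notMem_tsupport h0 := by
    have hclosed : IsClosed {ξ : V | r ≤ ‖ξ‖} := isClosed_le continuous_const continuous_norm
    have h : r ≤ ‖(0 : V)‖ := closure_minimal (fun ξ hξ => (hsupp hξ).1) hclosed h0
    exact hr.not_ge (h.trans_eq norm_zero)

section Basic

variable {V : Type*} [NormedAddCommGroup V] [NormedSpace ℝ V] {b : V → ℂ}

lemma apply_zero (hb : IsAnnularSymbol b) : b 0 = 0 :=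
  image_eq_zero_of_notMem_tsupport hb.zero_notMem_tsupport

lemma mul (hb : IsAnnularSymbol b) {g : V → ℂ} (hg : ∀ ξ ≠ 0, ContDiffAt ℝ ∞ g ξ) :
    IsAnnularSymbol fun ξ => b ξ * g ξ where
  contDiff := by
    refine contMDiff_iff_contDiff.1 (contMDiff_of_tsupport fun ξ hξ => ?_)
    have hξ0 : ξ ≠ 0 := fun h => hb.zero_notMem_tsupport (h ▸ tsupport_mul_subset_left hξ)
    exact (hb.contDiff.contDiffAt.mul (hg ξ hξ0)).contMDiffAt
  hasCompactSupport := hb.hasCompactSupport.mul_right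
  zero_notMem_tsupport h := hb.zero_notMem_tsupport (tsupport_mul_subset_left h)

/-- An annular symbol as a Schwartz function. -/
def toSchwartzMap (hb : IsAnnularSymbol b) : 𝓢(V, ℂ) :=
  hb.hasCompactSupport.toSchwartzMap hb.contDiff

lemma hasTemperateGrowth (hb : IsAnnularSymbol b) : b.HasTemperateGrowth :=
  hb.toSchwartzMap.hasTemperateGrowth

end Basic

section Gradient

variable {V : Type*} [NormedAddCommGroup V] [InnerProductSpace ℝ V] {b : V → ℂ}

lemma mul_inner_div_norm_sq (hb : IsAnnularSymbol b) (e : V) :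
    IsAnnularSymbol fun ξ => b ξ * ((inner ℝ ξ e / ‖ξ‖ ^ 2 : ℝ) / (2 * π * I)) := by
  refine hb.mul fun ξ hξ => ?_
  have hreal : ContDiffAt ℝ ∞ (fun ξ : V => inner ℝ ξ e / ‖ξ‖ ^ 2) ξ :=
    (contDiffAt_id.inner ℝ contDiffAt_const).div (contDiff_norm_sq ℝ).contDiffAt
      (pow_ne_zero 2 (norm_ne_zero_iff.2 hξ))
  exact (Complex.ofRealCLM.contDiff.contDiffAt.comp ξ hreal).div_const _

lemma dilate_eq_sum_mul_inner (hb : IsAnnularSymbol b) {ι : Type*} [Fintype ι]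
    (e : OrthonormalBasis ι ℝ V) {L : ℝ} (hL : L ≠ 0) (ξ : V) :
    dilate L b ξ = (L⁻¹ : ℂ) * ∑ i, dilate L (fun ζ => b ζ * ((inner ℝ ζ (e i) / ‖ζ‖ ^ 2 : ℝ) /
      (2 * π * I))) ξ * (2 * π * I * (inner ℝ ξ (e i) : ℝ)) := by
  obtain ⟨ζ, rfl⟩ : ∃ ζ, ξ = L • ζ := ⟨L⁻¹ • ξ, by rw [smul_inv_smul₀ hL]⟩
  simp only [dilate, inv_smul_smul₀ hL, inner_smul_left, conj_trivial]
  rcases eq_or_ne ζ 0 with rfl | hζ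
  · simp [hb.apply_zero]
  have hsum : ∑ i, ((inner ℝ ζ (e i) : ℝ) : ℂ) ^ 2 = (‖ζ‖ : ℂ) ^ 2 := by
    exact_mod_cast e.sum_sq_inner_left ζ
  have hζ' : (‖ζ‖ : ℂ) ≠ 0 := by simpa using hζ
  have hL' : (L : ℂ) ≠ 0 := by exact_mod_cast hL
  have hterm (i : ι) : b ζ * ((inner ℝ ζ (e i) / ‖ζ‖ ^ 2 : ℝ) / (2 * π * I)) *
      (2 * π * I * (L * inner ℝ ζ (e i) : ℝ)) =
        L * b ζ / (‖ζ‖ : ℂ) ^ 2 * ((inner ℝ ζ (e i) : ℝ) : ℂ) ^ 2 := by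
    have := Complex.two_pi_I_ne_zero
    push_cast
    field_simp
  simp_rw [hterm, ← Finset.mul_sum, hsum]
  field_simp

variable [FiniteDimensional ℝ V] [MeasurableSpace V] [BorelSpace V]

local notation "d" => Module.finrank ℝ V

lemma fourierMultiplierCLM_dilate_eq_sum (hb : IsAnnularSymbol b) {ι : Type*} [Fintype ι]
    (e : OrthonormalBasis ι ℝ V) {L : ℝ} (hL : L ≠ 0) (f : 𝓢(V, ℂ)) :
    fourierMultiplierCLM ℂ (dilate L b) f = (L⁻¹ : ℂ) • ∑ i,
      fourierMultiplierCLM ℂ (dilate L (hb.mul_inner_div_norm_sq (e i)).toSchwartzMap)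
        (LineDeriv.lineDerivOp (e i) f) := by
  set a : ι → V → ℂ := fun i => dilate L (hb.mul_inner_div_norm_sq (e i)).toSchwartzMap
  set l : ι → V → ℂ := fun i ξ => (inner ℝ ξ (e i) : ℝ)
  have ha (i : ι) : (a i).HasTemperateGrowth :=
    hasTemperateGrowth_dilate (SchwartzMap.hasTemperateGrowth _) L
  have hinner (i : ι) : (fun ξ : V => inner ℝ ξ (e i)).HasTemperateGrowth := by fun_prop
  have hl (i : ι) : (l i).HasTemperateGrowth := Complex.ofRealCLM.hasTemperateGrowth.comp (hinner i)
  have hcl (i : ι) : ((2 * π * I : ℂ) • l i).HasTemperateGrowth :=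
    (Function.HasTemperateGrowth.const _).mul (hl i)
  have hal (i : ι) : (a i * ((2 * π * I : ℂ) • l i)).HasTemperateGrowth := (ha i).mul (hcl i)
  have hsymbol : dilate L b = (L⁻¹ : ℂ) • fun ξ => ∑ i, (a i * ((2 * π * I : ℂ) • l i)) ξ := by
    funext ξ
    exact hb.dilate_eq_sum_mul_inner e hL ξ
  rw [hsymbol, fourierMultiplierCLM_smul (.sum fun i _ => hal i),
    fourierMultiplierCLM_sum ℂ fun i _ => hal i]
  simp only [_root_.smul_apply, _root_.sum_apply]
  congr 1
  refine Finset.sum_congr rfl fun i _ => ?_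
  rw [lineDeriv_eq_fourierMultiplierCLM, ← fourierMultiplierCLM_ofReal ℂ (hinner i),
    ← fourierMultiplierCLM_fourierMultiplierCLM_apply (ha i) (hcl i),
    fourierMultiplierCLM_smul (hl i), _root_.smul_apply]
  rfl

lemma exists_eLpNorm_dilate_le_fderiv (hb : IsAnnularSymbol b) {q r : ℝ≥0∞} (hq : 1 ≤ q)
    (hqr : q ≤ r) (hr : r ≠ ⊤) :
    ∃ C : ℝ≥0, ∀ L > 0, ∀ f : 𝓢(V, ℂ),
      eLpNorm (fourierMultiplierCLM ℂ (dilate L b) f) r volume ≤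
        C * ENNReal.ofReal (L ^ (d * (q.toReal⁻¹ - r.toReal⁻¹) - 1)) *
          eLpNorm (fderiv ℝ f) q volume := by
  set e := stdOrthonormalBasis ℝ V
  choose C hC using fun i => exists_eLpNorm_fourierMultiplierCLM_dilate_le
    (hb.mul_inner_div_norm_sq (e i)).toSchwartzMap hq hqr hr
  refine ⟨∑ i, C i, fun L hL f => ?_⟩
  have hderiv (i) : eLpNorm (LineDeriv.lineDerivOp (e i) f : 𝓢(V, ℂ)) q volume ≤
      eLpNorm (fderiv ℝ f) q volume := by
    refine eLpNorm_mono fun x => ?_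
    simpa [lineDerivOp_apply_eq_fderiv] using (fderiv ℝ f x).le_opNorm (e i)
  rw [hb.fourierMultiplierCLM_dilate_eq_sum e hL.ne' f, FunLike.coe_smul, eLpNorm_const_smul,
    FunLike.coe_sum]
  set A := ENNReal.ofReal (L ^ (d * (q.toReal⁻¹ - r.toReal⁻¹)))
  calc _ ≤ ‖(L⁻¹ : ℂ)‖ₑ * ∑ i, C i * A * eLpNorm (fderiv ℝ f) q volume := by
        gcongr
        refine (eLpNorm_sum_le (fun i _ => (SchwartzMap.continuous _).aestronglyMeasurable)
          (hq.trans hqr)).trans (Finset.sum_le_sum fun i _ => ?_)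
        exact (hC i L hL _).trans (by gcongr; exact hderiv i)
    _ = _ := by
        rw [← Finset.sum_mul, ← Finset.sum_mul, ENNReal.ofNNReal_finsetSum,
          Real.rpow_sub_one hL.ne', div_eq_mul_inv, ENNReal.ofReal_mul (by positivity),
          ← ofReal_norm, norm_inv, Complex.norm_of_nonneg hL.le]
        ring

end Gradient

end IsAnnularSymbol

end AnnularSymbol

section Sobolev

variable {E F : Type*} [NormedAddCommGroup E] [NormedSpace ℝ E] [NormedAddCommGroup F]
  [NormedSpace ℝ F]

lemma tendsto_comp_smul_smul {χ : E → ℝ} (hχ : χ =ᶠ[𝓝 0] 1) {ι : Type*} {l : Filter ι} {c : ι → ℝ}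
    (hc : Tendsto c l (𝓝 0)) (u : E → F) (x : E) :
    Tendsto (fun i => χ (c i • x) • u x) l (𝓝 (u x)) := by
  have hcx : Tendsto (fun i => c i • x) l (𝓝 0) := by simpa using hc.smul_const x
  refine tendsto_const_nhds.congr' ?_
  filter_upwards [hcx.eventually hχ] with i hi
  rw [hi, Pi.one_apply, one_smul]

lemma norm_fderiv_comp_smul_smul_le {χ : E → ℝ} {u : E → F} (hχ : Differentiable ℝ χ)
    (hu : Differentiable ℝ u) (hχ1 : ∀ x, ‖χ x‖ ≤ 1) {B : ℝ} (hB : ∀ x, ‖fderiv ℝ χ x‖ ≤ B)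
    (c : ℝ) (x : E) :
    ‖fderiv ℝ (fun y => χ (c • y) • u y) x‖ ≤ ‖fderiv ℝ u x‖ + |c| * B * ‖u x‖ := by
  have hχc : DifferentiableAt ℝ (fun y => χ (c • y)) x :=
    (hχ.comp (differentiable_id.const_smul c)).differentiableAt
  rw [fderiv_fun_smul hχc hu.differentiableAt, fderiv_comp_smul]
  refine (norm_add_le _ _).trans (add_le_add ?_ ?_)
  · rw [norm_smul]
    exact mul_le_of_le_one_left (norm_nonneg _) (hχ1 _)
  · rw [ContinuousLinearMap.norm_smulRight_apply, norm_smul, Real.norm_eq_abs]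
    gcongr
    exact hB _

variable [MeasurableSpace E] [BorelSpace E]

lemma eLpNorm_fderiv_comp_smul_smul_le (μ : Measure E) {χ : E → ℝ} {u : E → F}
    (hχ : Differentiable ℝ χ) (hu : ContDiff ℝ 1 u) (hχ1 : ∀ x, ‖χ x‖ ≤ 1) {B : ℝ}
    (hB : ∀ x, ‖fderiv ℝ χ x‖ ≤ B) (c : ℝ) {p : ℝ≥0∞} (hp : 1 ≤ p) :
    eLpNorm (fderiv ℝ fun y => χ (c • y) • u y) p μ ≤
      eLpNorm (fderiv ℝ u) p μ + ENNReal.ofReal (|c| * B) * eLpNorm u p μ := by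
  have hB0 : 0 ≤ |c| * B := mul_nonneg (abs_nonneg c) ((norm_nonneg _).trans (hB 0))
  have hu' : Continuous (fderiv ℝ u) := hu.continuous_fderiv one_ne_zero
  calc eLpNorm (fderiv ℝ fun y => χ (c • y) • u y) p μ
      ≤ eLpNorm ((fun x => ‖fderiv ℝ u x‖) + (|c| * B) • fun x => ‖u x‖) p μ :=
        eLpNorm_mono_real fun x => norm_fderiv_comp_smul_smul_le hχ
          (hu.differentiable one_ne_zero) hχ1 hB c x
    _ ≤ eLpNorm (fun x => ‖fderiv ℝ u x‖) p μ + eLpNorm ((|c| * B) • fun x => ‖u x‖) p μ :=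
        eLpNorm_add_le hu'.norm.aestronglyMeasurable
          (hu.continuous.norm.aestronglyMeasurable.const_smul _) hp
    _ = _ := by
        rw [eLpNorm_norm, eLpNorm_const_smul, eLpNorm_norm, Real.enorm_of_nonneg hB0]

variable [FiniteDimensional ℝ E]

/-- The **Gagliardo–Nirenberg–Sobolev inequality** without compact support. -/
lemma eLpNorm_le_eLpNorm_fderiv_of_memLp (μ : Measure E) [μ.IsAddHaarMeasure]
    [FiniteDimensional ℝ F] {u : E → F} (hu : ContDiff ℝ 1 u) {p p' : ℝ≥0} (hup : MemLp u p μ)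
    (hp : 1 ≤ p) (hE : 0 < Module.finrank ℝ E)
    (hp' : (p' : ℝ)⁻¹ = (p : ℝ)⁻¹ - (Module.finrank ℝ E : ℝ)⁻¹) :
    eLpNorm u p' μ ≤ SNormLESNormFDerivOfEqConst F μ p * eLpNorm (fderiv ℝ u) p μ := by
  let χ : ContDiffBump (0 : E) := ⟨1, 2, one_pos, one_lt_two⟩
  have hχ1 (x : E) : ‖χ x‖ ≤ 1 := by rw [Real.norm_of_nonneg χ.nonneg]; exact χ.le_one
  obtain ⟨B, hB⟩ : ∃ B, ∀ x, ‖fderiv ℝ χ x‖ ≤ B :=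
    (χ.contDiff.continuous_fderiv (n := 1) one_ne_zero).bounded_above_of_compact_support
      (χ.hasCompactSupport.fderiv ℝ)
  set c : ℕ → ℝ := fun n => 1 / ((n : ℝ) + 1)
  have hc : Tendsto c atTop (𝓝 0) := tendsto_one_div_add_atTop_nhds_zero_nat
  have hc0 (n : ℕ) : c n ≠ 0 := by positivity
  have hsmooth (n : ℕ) : ContDiff ℝ 1 fun x => χ (c n • x) • u x :=
    (χ.contDiff.comp (contDiff_const_smul _)).smul hu
  have hcompact (n : ℕ) : HasCompactSupport fun x => χ (c n • x) • u x :=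
    (χ.hasCompactSupport.comp_smul (hc0 n)).smul_right
  have hbound (n : ℕ) : eLpNorm (fun x => χ (c n • x) • u x) p' μ ≤
      SNormLESNormFDerivOfEqConst F μ p *
        (eLpNorm (fderiv ℝ u) p μ + ENNReal.ofReal (|c n| * B) * eLpNorm u p μ) :=
    (eLpNorm_le_eLpNorm_fderiv_of_eq μ (hsmooth n) (hcompact n) hp hE hp').trans <| by
      gcongr
      exact eLpNorm_fderiv_comp_smul_smul_le μ (χ.contDiff (n := 1).differentiable one_ne_zero)
        hu hχ1 hB (c n) (by exact_mod_cast hp)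
  have herror : Tendsto (fun n => ENNReal.ofReal (|c n| * B) * eLpNorm u p μ) atTop (𝓝 0) := by
    have := ENNReal.Tendsto.mul_const (ENNReal.tendsto_ofReal (hc.abs.mul_const B))
      (.inr hup.eLpNorm_ne_top)
    simpa using this
  have hlim := ENNReal.Tendsto.const_mul (a := (SNormLESNormFDerivOfEqConst F μ p : ℝ≥0∞))
    (herror.const_add (eLpNorm (fderiv ℝ u) p μ)) (.inr ENNReal.coe_ne_top)
  rw [add_zero] at hlim
  calc eLpNorm u p' μ ≤ atTop.liminf fun n => eLpNorm (fun x => χ (c n • x) • u x) p' μ :=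
        Lp.eLpNorm_lim_le_liminf_eLpNorm
          (fun n => (hsmooth n).continuous.aestronglyMeasurable) u
          (ae_of_all _ (tendsto_comp_smul_smul χ.eventuallyEq_one hc u))
    _ ≤ _ := (liminf_le_liminf (.of_forall hbound)).trans_eq hlim.liminf_eq

end Sobolev

section LittlewoodPaley

variable {V : Type*} [NormedAddCommGroup V] [InnerProductSpace ℝ V] [FiniteDimensional ℝ V]
  [MeasurableSpace V] [BorelSpace V]

lemma fourierMultiplierCLM_sub_apply {g₁ g₂ : V → ℂ} (hg₁ : g₁.HasTemperateGrowth)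
    (hg₂ : g₂.HasTemperateGrowth) (f : 𝓢(V, ℂ)) :
    fourierMultiplierCLM ℂ (g₁ - g₂) f =
      fourierMultiplierCLM ℂ g₁ f - fourierMultiplierCLM ℂ g₂ f := by
  simp only [fourierMultiplierCLM_apply, smulLeftCLM_sub hg₁ hg₂, _root_.sub_apply]
  exact map_sub (FourierTransform.fourierCLE ℂ 𝓢(V, ℂ)).symm _ _

lemma sub_fourierMultiplierCLM_dilate_eq_sum (m f : 𝓢(V, ℂ)) (N : ℝ) (n : ℕ) :
    fourierMultiplierCLM ℂ (dilate (2 ^ n * N) m) f - fourierMultiplierCLM ℂ (dilate N m) f =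
      ∑ k ∈ Finset.range n, fourierMultiplierCLM ℂ (dilate (2 ^ k * N) (dilate 2 ⇑m - ⇑m)) f := by
  have hdyadic (k : ℕ) : dilate (2 ^ k * N) (dilate 2 ⇑m - ⇑m) =
      dilate (2 ^ (k + 1) * N) m - dilate (2 ^ k * N) m := by
    funext ξ
    simp only [dilate, Pi.sub_apply, smul_smul]
    congr 3
    ring
  have hm (L : ℝ) := hasTemperateGrowth_dilate m.hasTemperateGrowth L
  simp_rw [hdyadic, fourierMultiplierCLM_sub_apply (hm _) (hm _)]
  rw [Finset.sum_range_sub fun k => fourierMultiplierCLM ℂ (dilate (2 ^ k * N) m) f, pow_zero,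
    one_mul]

lemma eLpNorm_sub_fourierMultiplierCLM_dilate_le_tsum (m f : 𝓢(V, ℂ)) (hm : m 0 = 1) {N : ℝ}
    (hN : 0 < N) {r : ℝ≥0∞} (hr : 1 ≤ r) :
    eLpNorm (f - fourierMultiplierCLM ℂ (dilate N m) f : 𝓢(V, ℂ)) r volume ≤
      ∑' k : ℕ, eLpNorm (fourierMultiplierCLM ℂ (dilate (2 ^ k * N) (dilate 2 ⇑m - ⇑m)) f)
        r volume := by
  have hscale : Tendsto (fun n : ℕ => (2 : ℝ) ^ n * N) atTop atTop :=
    (tendsto_pow_atTop_atTop_of_one_lt one_lt_two).atTop_mul_const hN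
  have hpointwise (x : V) : Tendsto (fun n : ℕ => (fourierMultiplierCLM ℂ (dilate (2 ^ n * N) m) f -
      fourierMultiplierCLM ℂ (dilate N m) f) x) atTop
      (𝓝 ((f - fourierMultiplierCLM ℂ (dilate N m) f) x)) := by
    have := (tendsto_fourierMultiplierCLM_dilate m f hscale x).sub_const
      (fourierMultiplierCLM ℂ (dilate N m) f x)
    simpa only [hm, one_mul, _root_.sub_apply] using this
  refine (Lp.eLpNorm_lim_le_liminf_eLpNorm
    (fun n => (SchwartzMap.continuous _).aestronglyMeasurable) _
    (ae_of_all _ hpointwise)).trans (liminf_le_of_le ⟨0, by simp⟩ fun b hb => ?_)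
  obtain ⟨n, hn⟩ := hb.exists
  refine hn.trans ?_
  rw [sub_fourierMultiplierCLM_dilate_eq_sum, FunLike.coe_sum]
  exact (eLpNorm_sum_le (fun k _ => (SchwartzMap.continuous _).aestronglyMeasurable) hr).trans
    (ENNReal.sum_le_tsum _)

lemma eLpNorm_sub_fourierMultiplierCLM_dilate_le (m f : 𝓢(V, ℂ)) (hm : m 0 = 1) {N : ℝ}
    (hN : 0 < N) {r : ℝ≥0∞} (hr : 1 ≤ r) {A ρ : ℝ≥0∞}
    (h : ∀ k : ℕ, eLpNorm (fourierMultiplierCLM ℂ (dilate (2 ^ k * N) (dilate 2 ⇑m - ⇑m)) f)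
      r volume ≤ A * ρ ^ k) :
    eLpNorm (f - fourierMultiplierCLM ℂ (dilate N m) f : 𝓢(V, ℂ)) r volume ≤
      A * (1 - ρ)⁻¹ := by
  rw [← ENNReal.tsum_geometric, ← ENNReal.tsum_mul_left]
  exact (eLpNorm_sub_fourierMultiplierCLM_dilate_le_tsum m f hm hN hr).trans
    (ENNReal.tsum_le_tsum h)

end LittlewoodPaley

section FrequencySplitting

variable {V : Type*} [NormedAddCommGroup V] [InnerProductSpace ℝ V]

lemma contDiffAt_ofReal_norm_rpow (a : ℝ) {ξ : V} (hξ : ξ ≠ 0) :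
    ContDiffAt ℝ ∞ (fun ζ : V => ((‖ζ‖ ^ a : ℝ) : ℂ)) ξ :=
  Complex.ofRealCLM.contDiff.contDiffAt.comp ξ
    ((contDiffAt_norm ℝ hξ).rpow_const_of_ne (norm_ne_zero_iff.2 hξ))

variable [FiniteDimensional ℝ V]

/-- A smooth frequency cutoff equal to `1` for `|ξ| ≤ 2` and vanishing for `|ξ| ≥ 4`. It is `1` on
the region where a cutoff `η` as in `IsCutoff` is not yet given by a power. -/
def lowFrequencyBump (V : Type*) [NormedAddCommGroup V] [InnerProductSpace ℝ V]
    [FiniteDimensional ℝ V] : 𝓢(V, ℂ) :=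
  let χ : ContDiffBump (0 : V) := ⟨2, 4, two_pos, by norm_num⟩
  HasCompactSupport.toSchwartzMap (f := fun ξ => (χ ξ : ℂ))
    (χ.hasCompactSupport.comp_left Complex.ofReal_zero)
    (Complex.ofRealCLM.contDiff.comp χ.contDiff)

/-- The difference of the dilate of `lowFrequencyBump` by `2` and `lowFrequencyBump`, the symbol of
one dyadic Littlewood–Paley piece. -/
def dyadicBump (V : Type*) [NormedAddCommGroup V] [InnerProductSpace ℝ V]
    [FiniteDimensional ℝ V] : V → ℂ :=
  dilate 2 ⇑(lowFrequencyBump V) - ⇑(lowFrequencyBump V)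

lemma lowFrequencyBump_of_norm_le_two {ξ : V} (hξ : ‖ξ‖ ≤ 2) : lowFrequencyBump V ξ = 1 := by
  have := ContDiffBump.one_of_mem_closedBall (⟨2, 4, two_pos, by norm_num⟩ : ContDiffBump (0 : V))
    (mem_closedBall_zero_iff.2 hξ)
  exact congrArg Complex.ofReal this

lemma hasCompactSupport_lowFrequencyBump : HasCompactSupport (lowFrequencyBump V) :=
  (ContDiffBump.hasCompactSupport (⟨2, 4, two_pos, by norm_num⟩ : ContDiffBump (0 : V))).comp_left
    (g := Complex.ofReal) Complex.ofReal_zero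

lemma dyadicBump_of_norm_le_two {ξ : V} (hξ : ‖ξ‖ ≤ 2) : dyadicBump V ξ = 0 := by
  have hξ' : ‖(2 : ℝ)⁻¹ • ξ‖ ≤ 2 := by rw [norm_smul, norm_inv, Real.norm_two]; linarith
  simp only [dyadicBump, dilate, Pi.sub_apply, lowFrequencyBump_of_norm_le_two, hξ, hξ', sub_self]

lemma isAnnularSymbol_dyadicBump : IsAnnularSymbol (dyadicBump V) where
  contDiff := ((lowFrequencyBump V).smooth ⊤ |>.comp (contDiff_const_smul _)).sub
    ((lowFrequencyBump V).smooth ⊤)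
  hasCompactSupport :=
    (hasCompactSupport_lowFrequencyBump.comp_smul (inv_ne_zero two_ne_zero)).sub
      hasCompactSupport_lowFrequencyBump
  zero_notMem_tsupport := by
    rw [notMem_tsupport_iff_eventuallyEq]
    filter_upwards [Metric.closedBall_mem_nhds (0 : V) two_pos] with ξ hξ
    exact dyadicBump_of_norm_le_two (mem_closedBall_zero_iff.1 hξ)

namespace IsCutoff

variable {s : ℝ} {η : ℝ → ℝ}

lemma dilate_dyadicBump_eq (hη : IsCutoff s η) {N : ℝ} (hN : 0 < N) (k : ℕ) :
    dilate (2 ^ k * N) (dyadicBump V) = ((((2 : ℝ) ^ k) ^ (1 - s) : ℝ) : ℂ) •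
      (dilate (2 ^ k * N) (fun ζ => dyadicBump V ζ * (‖ζ‖ ^ (1 - s) : ℝ)) *
        dilate N (cutoffSymbol η)) := by
  funext ξ
  obtain ⟨ζ, rfl⟩ : ∃ ζ, ξ = (2 ^ k * N) • ζ :=
    ⟨(2 ^ k * N)⁻¹ • ξ, by rw [smul_inv_smul₀ (by positivity)]⟩
  have hζN : N⁻¹ • (2 ^ k * N) • ζ = (2 : ℝ) ^ k • ζ := by
    rw [smul_smul]
    congr 1
    field_simp
  simp only [dilate, Pi.smul_apply, Pi.mul_apply, smul_eq_mul, hζN,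
    inv_smul_smul₀ (by positivity : (2 : ℝ) ^ k * N ≠ 0)]
  rcases le_or_gt ‖ζ‖ 2 with hζ | hζ
  · simp [dyadicBump_of_norm_le_two hζ]
  have hnorm : ‖(2 : ℝ) ^ k • ζ‖ = 2 ^ k * ‖ζ‖ := by
    rw [norm_smul, Real.norm_of_nonneg (by positivity)]
  have hlarge : 2 ≤ ‖(2 : ℝ) ^ k • ζ‖ := by
    nlinarith [one_le_pow₀ (n := k) (one_le_two (α := ℝ))]
  have : 0 < ‖ζ‖ := two_pos.trans hζ
  have hcancel : ((2 : ℝ) ^ k) ^ (1 - s) * (‖ζ‖ ^ (1 - s) * (2 ^ k * ‖ζ‖) ^ (s - 1)) = 1 := by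
    rw [← mul_assoc, ← Real.mul_rpow (by positivity) (by positivity),
      ← Real.rpow_add (by positivity), sub_add_sub_cancel, sub_self, Real.rpow_zero]
  rw [hη.cutoffSymbol_of_two_le_norm hlarge, hnorm]
  have hcancel' := congrArg Complex.ofReal hcancel
  push_cast at hcancel' ⊢
  linear_combination -(dyadicBump V ζ) * hcancel'

variable [MeasurableSpace V] [BorelSpace V]

local notation "d" => Module.finrank ℝ V

lemma exists_eLpNorm_fourierMultiplierCLM_lowFrequencyBump_le (hη : IsCutoff s η) {p p' : ℝ≥0}
    (hp : 1 ≤ p) (hp1 : 1 ≤ p') (hV : 0 < d) (hp' : (p' : ℝ)⁻¹ = (p : ℝ)⁻¹ - (d : ℝ)⁻¹) :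
    ∃ C : ℝ≥0, ∀ N > 0, ∀ f : 𝓢(V, ℂ),
      eLpNorm (fourierMultiplierCLM ℂ (dilate N (lowFrequencyBump V)) f) p' volume ≤
        C * eLpNorm (fderiv ℝ (fourierMultiplierCLM ℂ (dilate N (cutoffSymbol η)) f)) p volume := by
  obtain ⟨m, hm⟩ := hη.exists_schwartzMap_mul_cutoffSymbol_eq
    ((lowFrequencyBump V).smooth ⊤) hasCompactSupport_lowFrequencyBump
  obtain ⟨C, hC⟩ := exists_eLpNorm_fourierMultiplierCLM_dilate_le m
    (ENNReal.one_le_coe_iff.2 hp1) le_rfl ENNReal.coe_ne_top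
  refine ⟨C * SNormLESNormFDerivOfEqConst ℂ (volume : Measure V) p, fun N hN f => ?_⟩
  set u := fourierMultiplierCLM ℂ (dilate N (cutoffSymbol η)) f
  have hfactor : fourierMultiplierCLM ℂ (dilate N (lowFrequencyBump V)) f =
      fourierMultiplierCLM ℂ (dilate N m) u := by
    rw [fourierMultiplierCLM_fourierMultiplierCLM_apply
      (hasTemperateGrowth_dilate m.hasTemperateGrowth N)
      (hasTemperateGrowth_dilate hη.hasTemperateGrowth_cutoffSymbol N), ← hm]
    rfl
  have hbernstein := hC N hN u
  rw [sub_self, mul_zero, Real.rpow_zero, ENNReal.ofReal_one, mul_one] at hbernstein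
  rw [hfactor, ENNReal.coe_mul, mul_assoc]
  exact hbernstein.trans (mul_le_mul_right (eLpNorm_le_eLpNorm_fderiv_of_memLp volume (u.smooth 1)
    (u.memLp p volume) hp hV hp') _)

lemma exists_eLpNorm_fourierMultiplierCLM_dyadicBump_le (hη : IsCutoff s η) {q r : ℝ≥0∞}
    (hq : 1 ≤ q) (hqr : q ≤ r) (hr : r ≠ ⊤) :
    ∃ C : ℝ≥0, ∀ N > 0, ∀ f : 𝓢(V, ℂ), ∀ k : ℕ,
      eLpNorm (fourierMultiplierCLM ℂ (dilate (2 ^ k * N) (dyadicBump V)) f) r volume ≤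
        C * ENNReal.ofReal (N ^ (d * (q.toReal⁻¹ - r.toReal⁻¹) - 1)) *
          eLpNorm (fderiv ℝ (fourierMultiplierCLM ℂ (dilate N (cutoffSymbol η)) f)) q volume *
            ENNReal.ofReal (2 ^ (d * (q.toReal⁻¹ - r.toReal⁻¹) - s)) ^ k := by
  have hB : IsAnnularSymbol fun ζ : V => dyadicBump V ζ * (‖ζ‖ ^ (1 - s) : ℝ) :=
    isAnnularSymbol_dyadicBump.mul fun ξ hξ => contDiffAt_ofReal_norm_rpow (1 - s) hξ
  obtain ⟨C, hC⟩ := hB.exists_eLpNorm_dilate_le_fderiv hq hqr hr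
  refine ⟨C, fun N hN f k => ?_⟩
  set σ := d * (q.toReal⁻¹ - r.toReal⁻¹)
  have hBgrowth := hasTemperateGrowth_dilate hB.hasTemperateGrowth (2 ^ k * N)
  have hηgrowth := hasTemperateGrowth_dilate
    (hη.hasTemperateGrowth_cutoffSymbol : (cutoffSymbol η : V → ℂ).HasTemperateGrowth) N
  have hexp : ((2 : ℝ) ^ k) ^ (1 - s) * (2 ^ k * N) ^ (σ - 1) =
      N ^ (σ - 1) * (2 ^ (σ - s)) ^ k := by
    rw [Real.mul_rpow (by positivity) hN.le, ← mul_assoc, ← Real.rpow_add (by positivity),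
      ← Real.rpow_natCast 2 k, ← Real.rpow_mul zero_le_two, ← Real.rpow_mul_natCast zero_le_two,
      mul_comm (N ^ _)]
    ring_nf
  rw [hη.dilate_dyadicBump_eq hN, fourierMultiplierCLM_smul (hBgrowth.mul hηgrowth),
    _root_.smul_apply, ← fourierMultiplierCLM_fourierMultiplierCLM_apply hBgrowth hηgrowth,
    FunLike.coe_smul, eLpNorm_const_smul, ← ofReal_norm, Complex.norm_of_nonneg (by positivity)]
  refine (mul_le_mul_right (hC _ (by positivity) _) _).trans_eq ?_
  have hexp' := congrArg ENNReal.ofReal hexp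
  rw [ENNReal.ofReal_mul (by positivity), ENNReal.ofReal_mul (by positivity),
    ENNReal.ofReal_pow (by positivity)] at hexp'
  set G := eLpNorm (fderiv ℝ (fourierMultiplierCLM ℂ (dilate N (cutoffSymbol η)) f)) q volume
  calc _ = C * G * (ENNReal.ofReal (((2 : ℝ) ^ k) ^ (1 - s)) *
          ENNReal.ofReal ((2 ^ k * N) ^ (σ - 1))) := by ring
    _ = _ := by rw [hexp']; ring

lemma exists_eLpNorm_sub_fourierMultiplierCLM_lowFrequencyBump_le (hη : IsCutoff s η)
    {q r : ℝ≥0∞} (hq : 1 ≤ q) (hqr : q ≤ r) (hr : r ≠ ⊤)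
    (hs : d * (q.toReal⁻¹ - r.toReal⁻¹) < s) :
    ∃ C : ℝ≥0, ∀ N > 0, ∀ f : 𝓢(V, ℂ),
      eLpNorm (f - fourierMultiplierCLM ℂ (dilate N (lowFrequencyBump V)) f : 𝓢(V, ℂ)) r volume ≤
        C * ENNReal.ofReal (N ^ (d * (q.toReal⁻¹ - r.toReal⁻¹) - 1)) *
          eLpNorm (fderiv ℝ (fourierMultiplierCLM ℂ (dilate N (cutoffSymbol η)) f)) q volume := by
  obtain ⟨C, hC⟩ :=
    hη.exists_eLpNorm_fourierMultiplierCLM_dyadicBump_le (V := V) hq hqr hr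
  set ρ := ENNReal.ofReal (2 ^ (d * (q.toReal⁻¹ - r.toReal⁻¹) - s))
  have hρ : ρ < 1 := by
    rw [ENNReal.ofReal_lt_one]
    exact Real.rpow_lt_one_of_one_lt_of_neg one_lt_two (sub_neg.2 hs)
  have hsum : (1 - ρ)⁻¹ ≠ ⊤ := ENNReal.inv_ne_top.2 (tsub_pos_of_lt hρ).ne'
  refine ⟨C * (1 - ρ)⁻¹.toNNReal, fun N hN f => ?_⟩
  refine (eLpNorm_sub_fourierMultiplierCLM_dilate_le _ f
    (lowFrequencyBump_of_norm_le_two (by simp)) hN (hq.trans hqr) (hC N hN f)).trans_eq ?_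
  rw [ENNReal.coe_mul, ENNReal.coe_toNNReal hsum]
  ring

end IsCutoff

end FrequencySplitting

section SmoothedProjection

variable {V : Type*} [NormedAddCommGroup V]

lemma IsAnnularSymbol.exists_le_norm [NormedSpace ℝ V] {b : V → ℂ} (hb : IsAnnularSymbol b) :
    ∃ δ > 0, ∀ ξ, b ξ ≠ 0 → δ ≤ ‖ξ‖ := by
  obtain ⟨δ, hδ, hball⟩ := Metric.mem_nhds_iff.1
    ((isClosed_tsupport b).isOpen_compl.mem_nhds hb.zero_notMem_tsupport)
  refine ⟨δ, hδ, fun ξ hξ => le_of_not_gt fun hlt => ?_⟩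
  exact hball (mem_ball_zero_iff.2 hlt) (subset_tsupport b hξ)

variable [InnerProductSpace ℝ V] {s : ℝ} {η : ℝ → ℝ} {b : V → ℂ}

lemma IsCutoff.exists_mul_dilate_cutoffSymbol_eq_smul (hη : IsCutoff s η)
    (hb : IsAnnularSymbol b) :
    ∃ δ > 0, ∀ L ∈ Set.Ioc 0 δ,
      b * dilate L (cutoffSymbol η) = (L ^ (1 - s) : ℝ) • fun ξ => b ξ * (‖ξ‖ ^ (s - 1) : ℝ) := by
  obtain ⟨δ, hδ, hsupp⟩ := hb.exists_le_norm
  refine ⟨δ / 2, half_pos hδ, fun L ⟨hL, hLδ⟩ => funext fun ξ => ?_⟩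
  simp only [dilate, Pi.mul_apply, Pi.smul_apply, Complex.real_smul]
  rcases eq_or_ne (b ξ) 0 with hξ | hξ
  · simp only [hξ, zero_mul, mul_zero]
  have hnorm : ‖L⁻¹ • ξ‖ = L⁻¹ * ‖ξ‖ := by rw [norm_smul, Real.norm_of_nonneg (by positivity)]
  have hlarge : 2 ≤ ‖L⁻¹ • ξ‖ := by
    rw [hnorm, le_inv_mul_iff₀ hL]
    linarith [hsupp ξ hξ]
  rw [hη.cutoffSymbol_of_two_le_norm hlarge, hnorm, Real.mul_rpow (by positivity) (norm_nonneg _),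
    Real.inv_rpow hL.le, ← Real.rpow_neg hL.le, neg_sub]
  push_cast
  ring

variable [FiniteDimensional ℝ V] [MeasurableSpace V] [BorelSpace V]

local notation "d" => Module.finrank ℝ V

lemma exists_eLpNorm_fourierInv_mul_dilate_le {g : V → ℂ} (hg : ContDiff ℝ ∞ g) (b : 𝓢(V, ℂ))
    (hb : HasCompactSupport b) {p : ℝ≥0∞} (hp : 1 ≤ p) (hp' : p ≠ ⊤) {δ : ℝ} (hδ : 0 < δ) :
    ∃ C : ℝ≥0, ∀ L ≥ δ, eLpNorm (𝓕⁻ (⇑b * dilate L g)) p volume ≤ C := by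
  obtain ⟨R, hR, hbR⟩ := hb.exists_pos_le_norm
  set χ := dilate (R / (2 * δ)) (lowFrequencyBump V)
  have hχ : ContDiff ℝ ∞ χ := ((lowFrequencyBump V).smooth ⊤).comp (contDiff_const_smul _)
  have hχc : HasCompactSupport χ :=
    hasCompactSupport_lowFrequencyBump.comp_smul (inv_ne_zero (by positivity))
  set θ : 𝓢(V, ℂ) := HasCompactSupport.toSchwartzMap (f := χ * g) hχc.mul_right (hχ.mul hg)
  obtain ⟨C, hC⟩ := exists_eLpNorm_fourierMultiplierCLM_dilate_le θ hp le_rfl hp'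
  have hfin : eLpNorm (𝓕⁻ b : 𝓢(V, ℂ)) p volume ≠ ⊤ := (SchwartzMap.memLp _ p volume).2.ne
  refine ⟨C * (eLpNorm (𝓕⁻ b : 𝓢(V, ℂ)) p volume).toNNReal, fun L hL => ?_⟩
  have hL0 : 0 < L := hδ.trans_le hL
  have hsymbol : ⇑b * dilate L g = fun ξ => dilate L θ ξ * b ξ := by
    funext ξ
    rw [Pi.mul_apply, mul_comm]
    by_cases hξ : R ≤ ‖ξ‖
    · rw [hbR ξ hξ, mul_zero, mul_zero]
    have hχξ : χ (L⁻¹ • ξ) = 1 := lowFrequencyBump_of_norm_le_two <| by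
      rw [norm_smul, norm_smul, norm_inv, norm_inv, Real.norm_of_nonneg hL0.le,
        Real.norm_of_nonneg (by positivity), inv_div, ← div_eq_inv_mul,
        div_mul_div_comm, div_le_iff₀ (by positivity)]
      nlinarith [not_le.1 hξ]
    change g (L⁻¹ • ξ) * b ξ = χ (L⁻¹ • ξ) * g (L⁻¹ • ξ) * b ξ
    rw [hχξ, one_mul]
  have hmul : 𝓕⁻ (⇑b * dilate L g) = fourierMultiplierCLM ℂ (dilate L θ) (𝓕⁻ b) := by
    rw [fourierMultiplierCLM_apply_eq_fourierInv
      (hasTemperateGrowth_dilate θ.hasTemperateGrowth L), hsymbol, ← fourier_coe,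
      FourierTransform.fourier_fourierInv_eq]
  have hbernstein := hC L hL0 (𝓕⁻ b)
  rwa [sub_self, mul_zero, Real.rpow_zero, ENNReal.ofReal_one, mul_one,
    ← hmul, ← ENNReal.coe_toNNReal hfin,
    ← ENNReal.coe_mul] at hbernstein

lemma IsCutoff.exists_eLpNorm_fourierInv_mul_dilate_cutoffSymbol_le (hη : IsCutoff s η)
    (hs : s ≤ 1) (hb : IsAnnularSymbol b) {p : ℝ≥0∞} (hp : 1 ≤ p) (hp' : p ≠ ⊤) :
    ∃ C : ℝ≥0, ∀ L > 0, eLpNorm (𝓕⁻ (b * dilate L (cutoffSymbol η))) p volume ≤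
      C * ENNReal.ofReal (min 1 (L ^ (1 - s))) := by
  obtain ⟨δ₀, hδ₀, hsmall⟩ := hη.exists_mul_dilate_cutoffSymbol_eq_smul hb
  obtain ⟨δ, hδ, hδ1, hδδ₀⟩ : ∃ δ : ℝ, 0 < δ ∧ δ ≤ 1 ∧ δ ≤ δ₀ :=
    ⟨min 1 δ₀, lt_min one_pos hδ₀, min_le_left _ _, min_le_right _ _⟩
  obtain ⟨C₁, hC₁⟩ := exists_eLpNorm_fourierInv_mul_dilate_le
    hη.hasTemperateGrowth_cutoffSymbol.1 hb.toSchwartzMap hb.hasCompactSupport hp hp' hδ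
  set b' : 𝓢(V, ℂ) :=
    (hb.mul fun ξ hξ => contDiffAt_ofReal_norm_rpow (s - 1) hξ).toSchwartzMap
  have hfin : eLpNorm (𝓕⁻ b' : 𝓢(V, ℂ)) p volume ≠ ⊤ := (SchwartzMap.memLp _ p volume).2.ne
  set C₂ : ℝ≥0 := (eLpNorm (𝓕⁻ b' : 𝓢(V, ℂ)) p volume).toNNReal
  have hs' : 0 ≤ 1 - s := sub_nonneg.2 hs
  have hδs : (δ ^ (1 - s)).toNNReal ≠ 0 := (Real.toNNReal_pos.2 (by positivity)).ne'
  refine ⟨C₁ / (δ ^ (1 - s)).toNNReal + C₂, fun L hL => ?_⟩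
  rcases le_total δ L with hδL | hLδ
  · have hmin : δ ^ (1 - s) ≤ min 1 (L ^ (1 - s)) :=
      le_min (Real.rpow_le_one hδ.le hδ1 hs') (by gcongr)
    calc eLpNorm (𝓕⁻ (b * dilate L (cutoffSymbol η))) p volume ≤ C₁ := hC₁ L hδL
      _ = ↑(C₁ / (δ ^ (1 - s)).toNNReal) * ENNReal.ofReal (δ ^ (1 - s)) := by
        rw [ENNReal.ofReal, ← ENNReal.coe_mul, div_mul_cancel₀ _ hδs]
      _ ≤ _ := by
        gcongr
        exact le_self_add
  · have hsymbol : b * dilate L (cutoffSymbol η) = ⇑((L ^ (1 - s) : ℝ) • b') :=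
      hsmall L ⟨hL, hLδ.trans hδδ₀⟩
    rw [min_eq_right (Real.rpow_le_one hL.le (hLδ.trans hδ1) hs'), hsymbol, ← fourierInv_coe,
      FourierTransform.fourierInv_smul, FunLike.coe_smul, eLpNorm_const_smul,
      Real.enorm_of_nonneg (by positivity), mul_comm,
      ← ENNReal.coe_toNNReal hfin]
    gcongr
    exact le_add_self

end SmoothedProjection

namespace IsCutoff

section SmoothedProjection

variable {V : Type*} [NormedAddCommGroup V] [InnerProductSpace ℝ V] [FiniteDimensional ℝ V]
  [MeasurableSpace V] [BorelSpace V] {b : V → ℂ} {s : ℝ}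
  {η : ℝ → ℝ}

local notation "d" => Module.finrank ℝ V

lemma exists_schwartzMap_smoothedProjection_eq (hη : IsCutoff s η) (hb : IsAnnularSymbol b)
    {M N : ℝ} (hM : 0 < M) :
    ∃ k : 𝓢(V, ℂ), ⇑k = dilate M (b * dilate (N / M) (cutoffSymbol η)) ∧ ∀ f : 𝓢(V, ℂ),
      fourierMultiplierCLM ℂ (dilate M b) (fourierMultiplierCLM ℂ (dilate N (cutoffSymbol η)) f) =
        fourierMultiplierCLM ℂ k f := by
  have hη' : (cutoffSymbol η : V → ℂ).HasTemperateGrowth := hη.hasTemperateGrowth_cutoffSymbol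
  obtain ⟨k, hk⟩ := exists_schwartzMap_coe_eq_dilate (HasCompactSupport.toSchwartzMap
    (f := b * dilate (N / M) (cutoffSymbol η)) hb.hasCompactSupport.mul_right
      (hb.contDiff.mul (hasTemperateGrowth_dilate hη' _).1)) hM
  change ⇑k = dilate M (b * dilate (N / M) (cutoffSymbol η)) at hk
  refine ⟨k, hk, fun f => ?_⟩
  rw [fourierMultiplierCLM_fourierMultiplierCLM_apply
    (hasTemperateGrowth_dilate hb.hasTemperateGrowth M) (hasTemperateGrowth_dilate hη' N), hk]
  congr 2
  funext ξ
  simp only [Pi.mul_apply, dilate, smul_smul]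
  congr 3
  field_simp

lemma exists_eLpNorm_smoothedProjection_le_add (hη : IsCutoff s η) (hs : s ≤ 1)
    (hb : IsAnnularSymbol b) {q r : ℝ≥0∞} (hq : 1 ≤ q) (hqr : q ≤ r) (hr : r ≠ ⊤) :
    ∃ C : ℝ≥0, ∀ M > 0, ∀ N > 0, ∀ (f : 𝓢(V, ℂ)) (g₁ g₂ : V → ℝ≥0∞), Measurable g₁ →
      Measurable g₂ → (∀ x, ‖f x‖ₑ ≤ g₁ x + g₂ x) →
        eLpNorm (fourierMultiplierCLM ℂ (dilate M b)
          (fourierMultiplierCLM ℂ (dilate N (cutoffSymbol η)) f)) r volume ≤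
            C * (eLpNorm g₁ r volume + ENNReal.ofReal
              (M ^ (d * (q.toReal⁻¹ - r.toReal⁻¹)) * (N / M) ^ (1 - s)) * eLpNorm g₂ q volume) := by
  obtain ⟨p, hp, hp', hpqr⟩ := exists_inv_add_inv_eq_one_add_inv hq hqr hr
  obtain ⟨C₁, hC₁⟩ :=
    hη.exists_eLpNorm_fourierInv_mul_dilate_cutoffSymbol_le hs hb le_rfl ENNReal.one_ne_top
  obtain ⟨C₂, hC₂⟩ := hη.exists_eLpNorm_fourierInv_mul_dilate_cutoffSymbol_le hs hb hp hp'
  refine ⟨C₁ + C₂, fun M hM N hN f g₁ g₂ hg₁ hg₂ hf => ?_⟩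
  have hNM : 0 < N / M := by positivity
  obtain ⟨k, hk, hkf⟩ := hη.exists_schwartzMap_smoothedProjection_eq hb (N := N) hM
  have hexp : d * (1 - p.toReal⁻¹) = d * (q.toReal⁻¹ - r.toReal⁻¹) := by
    linear_combination -(d : ℝ) * toReal_inv_add_toReal_inv hp hq hpqr
  have hk₁ : eLpNorm (𝓕⁻ (k : V → ℂ)) 1 volume ≤ ↑(C₁ + C₂) := by
    rw [hk, eLpNorm_fourierInv_dilate _ _ hM, ENNReal.toReal_one, inv_one, sub_self, mul_zero,
      Real.rpow_zero, ENNReal.ofReal_one, one_mul]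
    refine (hC₁ _ hNM).trans ((mul_le_of_le_one_right' ?_).trans ?_)
    · exact ENNReal.ofReal_le_one.2 (min_le_left _ _)
    · exact ENNReal.coe_le_coe.2 le_self_add
  have hk₂ : eLpNorm (𝓕⁻ (k : V → ℂ)) p volume ≤ ↑(C₁ + C₂) *
      ENNReal.ofReal (M ^ (d * (q.toReal⁻¹ - r.toReal⁻¹)) * (N / M) ^ (1 - s)) := by
    rw [hk, eLpNorm_fourierInv_dilate _ _ hM, hexp, ENNReal.ofReal_mul (by positivity),
      mul_left_comm]
    gcongr
    refine (hC₂ _ hNM).trans ?_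
    gcongr
    · exact le_add_self
    · exact min_le_right _ _
  rw [hkf]
  calc _ ≤ eLpNorm (𝓕⁻ (k : V → ℂ)) 1 volume * eLpNorm g₁ r volume +
          eLpNorm (𝓕⁻ (k : V → ℂ)) p volume * eLpNorm g₂ q volume :=
        eLpNorm_fourierMultiplierCLM_le_add k f hg₁ hg₂ hf le_rfl (hq.trans hqr) hp hq
          (hq.trans hqr) hr (by rw [inv_one]) hpqr
    _ ≤ _ := by
        rw [mul_add, ← mul_assoc]
        gcongr

end SmoothedProjection

end IsCutoff

section SmoothedCube

lemma add_pow_three_le (a b : ℝ≥0∞) : (a + b) ^ 3 ≤ 4 * a ^ 3 + 4 * b ^ 3 := by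
  have hconvex := ENNReal.rpow_add_le_mul_rpow_add_rpow a b (p := (3 : ℕ)) (by norm_num)
  rw [show ((3 : ℕ) : ℝ) - 1 = (2 : ℕ) by norm_num] at hconvex
  simp only [ENNReal.rpow_natCast] at hconvex
  exact hconvex.trans_eq (by ring)

lemma eLpNorm_le_mul_eLpNorm_pow_of_enorm_le {α E F : Type*} [MeasurableSpace α]
    [NormedAddCommGroup E] [TopologicalSpace F] [ContinuousENorm F] {μ : Measure α} {f : α → F}
    {g : α → E} {c : ℝ≥0} {n : ℕ} (hn : 0 < n) (h : ∀ x, ‖f x‖ₑ ≤ c * ‖g x‖ₑ ^ n) (p : ℝ≥0∞) :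
    eLpNorm f p μ ≤ c * eLpNorm g (p * n) μ ^ n := by
  have hpow : eLpNorm (fun x => ‖g x‖ₑ ^ n) p μ = eLpNorm g (p * n) μ ^ n := by
    simpa using eLpNorm_enorm_rpow (p := p) (μ := μ) g (q := n) (Nat.cast_pos.2 hn)
  rw [← hpow]
  exact eLpNorm_le_nnreal_smul_eLpNorm_of_ae_le_mul' (ae_of_all _ h) p

variable {V : Type*} [NormedAddCommGroup V] [InnerProductSpace ℝ V]

lemma exists_schwartzMap_coe_eq_pow (f : 𝓢(V, ℂ)) {n : ℕ} (hn : 1 ≤ n) :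
    ∃ g : 𝓢(V, ℂ), ⇑g = ⇑f ^ n := by
  induction n, hn using Nat.le_induction with
  | base => exact ⟨f, (pow_one _).symm⟩
  | succ n _ ih =>
    obtain ⟨g, hg⟩ := ih
    refine ⟨smulLeftCLM ℂ f g, funext fun x => ?_⟩
    rw [smulLeftCLM_apply_apply f.hasTemperateGrowth, hg, pow_succ', smul_eq_mul]
    rfl

variable [FiniteDimensional ℝ V] [MeasurableSpace V] [BorelSpace V] {b : V → ℂ} {s : ℝ}
  {η : ℝ → ℝ}

local notation "d" => Module.finrank ℝ V

lemma rpow_mul_div_rpow_mul_rpow_pow_three {M N : ℝ} (hM : 0 < M) (hN : 0 < N) {a t : ℝ}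
    (hat : a + 3 * t = 0) (σ : ℝ) :
    M ^ a * (N / M) ^ (1 - σ) * (N ^ t) ^ 3 = (M / N) ^ (a + σ - 1) := by
  have ht : (N ^ t) ^ 3 = (N ^ a)⁻¹ := by
    rw [← Real.rpow_mul_natCast hN.le, ← Real.rpow_neg hN.le]
    congr 1
    push_cast
    linarith
  have hσ : (N / M) ^ (1 - σ) = (M / N) ^ (σ - 1) := by
    rw [← inv_div, Real.inv_rpow (by positivity), ← Real.rpow_neg (by positivity), neg_sub]
  rw [ht, hσ, add_sub_assoc, Real.rpow_add (by positivity), Real.div_rpow hM.le hN.le a]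
  ring

namespace IsCutoff

lemma exists_eLpNorm_smoothedProjection_add_pow_three_le (hη : IsCutoff s η) (hs : s ≤ 1)
    (hb : IsAnnularSymbol b) {q r : ℝ≥0∞} (hq : 1 ≤ q) (hqr : q ≤ r) (hr : r ≠ ⊤) :
    ∃ C : ℝ≥0, ∀ M > 0, ∀ N > 0, ∀ u v g : 𝓢(V, ℂ), ⇑g = ⇑(u + v) ^ 3 →
      eLpNorm (fourierMultiplierCLM ℂ (dilate M b)
        (fourierMultiplierCLM ℂ (dilate N (cutoffSymbol η)) g)) r volume ≤
          C * (eLpNorm u (r * 3) volume ^ 3 + ENNReal.ofReal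
            (M ^ (d * (q.toReal⁻¹ - r.toReal⁻¹)) * (N / M) ^ (1 - s)) *
              eLpNorm v (q * 3) volume ^ 3) := by
  obtain ⟨C, hC⟩ := hη.exists_eLpNorm_smoothedProjection_le_add hs hb hq hqr hr
  refine ⟨C * 4, fun M hM N hN u v g hg => ?_⟩
  have hcube (x : V) : ‖g x‖ₑ ≤ 4 * ‖u x‖ₑ ^ 3 + 4 * ‖v x‖ₑ ^ 3 := by
    rw [hg, Pi.pow_apply, enorm_pow]
    exact (pow_le_pow_left' (enorm_add_le (u x) (v x)) 3).trans (add_pow_three_le _ _)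
  refine (hC M hM N hN g _ _ (by fun_prop) (by fun_prop) hcube).trans ?_
  rw [ENNReal.coe_mul, mul_assoc, ENNReal.coe_ofNat, mul_add 4, mul_left_comm 4]
  gcongr <;> exact eLpNorm_le_mul_eLpNorm_pow_of_enorm_le (c := 4) three_pos (fun _ => le_rfl) _

lemma exists_eLpNorm_smoothedProjection_pow_three_le (hη : IsCutoff s η) (hs : s ≤ 1)
    (hb : IsAnnularSymbol b) (hV : 0 < d) {p q r : ℝ≥0} (hp : 1 ≤ p) (hpq : p ≤ q * 3)
    (hq : 1 ≤ q) (hqr : q ≤ r) (hpr : (r * 3 : ℝ)⁻¹ = (p : ℝ)⁻¹ - (d : ℝ)⁻¹)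
    (hpqs : d * ((p : ℝ)⁻¹ - (q * 3 : ℝ)⁻¹) < s) :
    ∃ C : ℝ≥0, ∀ M > 0, ∀ N > 0, ∀ f g : 𝓢(V, ℂ), ⇑g = ⇑f ^ 3 →
      eLpNorm (fourierMultiplierCLM ℂ (dilate M b)
        (fourierMultiplierCLM ℂ (dilate N (cutoffSymbol η)) g)) r volume ≤
          C * ENNReal.ofReal (1 + (M / N) ^ (d * ((q : ℝ)⁻¹ - (r : ℝ)⁻¹) + s - 1)) *
            eLpNorm (fderiv ℝ (fourierMultiplierCLM ℂ (dilate N (cutoffSymbol η)) f)) p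
              volume ^ 3 := by
  obtain ⟨C₁, hlow⟩ := hη.exists_eLpNorm_fourierMultiplierCLM_lowFrequencyBump_le hp
    (p' := r * 3) (one_le_mul (hq.trans hqr) (by norm_num)) hV hpr
  obtain ⟨C₂, hhigh⟩ := hη.exists_eLpNorm_sub_fourierMultiplierCLM_lowFrequencyBump_le
    (V := V) (q := p) (r := ↑(q * 3)) (by exact_mod_cast hp) (by exact_mod_cast hpq)
    ENNReal.coe_ne_top hpqs
  obtain ⟨C₃, hproj⟩ := hη.exists_eLpNorm_smoothedProjection_add_pow_three_le hs hb (q := q)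
    (r := r) (by exact_mod_cast hq) (by exact_mod_cast hqr) ENNReal.coe_ne_top
  simp only [ENNReal.coe_toReal, ENNReal.coe_mul, ENNReal.coe_ofNat, ENNReal.toReal_mul,
    ENNReal.toReal_ofNat] at hlow hhigh hproj
  refine ⟨C₃ * (C₁ ^ 3 + C₂ ^ 3), fun M hM N hN f g hfg => ?_⟩
  specialize hlow N hN f
  specialize hhigh N hN f
  set low := fourierMultiplierCLM ℂ (dilate N (lowFrequencyBump V)) f
  set D := eLpNorm (fderiv ℝ (fourierMultiplierCLM ℂ (dilate N (cutoffSymbol η)) f)) p volume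
  set Y := N ^ (d * ((p : ℝ)⁻¹ - (q * 3 : ℝ)⁻¹) - 1)
  have hexp : d * ((q : ℝ)⁻¹ - (r : ℝ)⁻¹) + 3 * (d * ((p : ℝ)⁻¹ - (q * 3 : ℝ)⁻¹) - 1) = 0 := by
    have hd : (d : ℝ) * (d : ℝ)⁻¹ = 1 := mul_inv_cancel₀ (by positivity)
    rw [mul_inv] at hpr ⊢
    linear_combination 3 * hd - 3 * (d : ℝ) * hpr
  rw [← rpow_mul_div_rpow_mul_rpow_pow_three hM hN hexp s]
  set X := M ^ (d * ((q : ℝ)⁻¹ - (r : ℝ)⁻¹)) * (N / M) ^ (1 - s)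
  calc _ ≤ C₃ * (eLpNorm low (r * 3) volume ^ 3 +
          ENNReal.ofReal X * eLpNorm (f - low : 𝓢(V, ℂ)) (q * 3) volume ^ 3) :=
        hproj M hM N hN low (f - low) g (by rw [hfg, add_sub_cancel])
    _ ≤ C₃ * ((C₁ * D) ^ 3 + ENNReal.ofReal X * (C₂ * ENNReal.ofReal Y * D) ^ 3) := by
        gcongr
    _ = C₃ * (C₁ ^ 3 * 1 + C₂ ^ 3 * ENNReal.ofReal (X * Y ^ 3)) * D ^ 3 := by
        rw [ENNReal.ofReal_mul (p := X) (by positivity), ENNReal.ofReal_pow (by positivity)]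
        ring
    _ ≤ C₃ * ((C₁ ^ 3 + C₂ ^ 3) * (1 + ENNReal.ofReal (X * Y ^ 3))) * D ^ 3 := by
        rw [add_mul]
        gcongr
        exacts [le_self_add, le_add_self]
    _ = _ := by
        rw [ENNReal.ofReal_add zero_le_one (by positivity), ENNReal.ofReal_one]
        push_cast
        ring

end IsCutoff

end SmoothedCube

section SpacetimeEstimate

variable {s : ℝ} {η : ℝ → ℝ} {ψ : E3 → ℝ}

lemma Iop_eq_fourierMultiplierCLM (hη : IsCutoff s η) {N : ℝ} (hN : 0 < N) (f : 𝓢(E3, ℂ)) :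
    Iop η N f = fourierMultiplierCLM ℂ (dilate N (cutoffSymbol η)) f := by
  rw [fourierMultiplierCLM_apply_eq_fourierInv
    (hasTemperateGrowth_dilate hη.hasTemperateGrowth_cutoffSymbol N)]
  unfold Iop dilate cutoffSymbol
  simp only [norm_smul, norm_inv, Real.norm_of_nonneg hN.le, div_eq_inv_mul]

lemma PM_eq_fourierMultiplierCLM (hψ : (fun ξ => (ψ ξ : ℂ)).HasTemperateGrowth) (M : ℝ)
    (f : 𝓢(E3, ℂ)) : PM ψ M f = fourierMultiplierCLM ℂ (dilate M fun ξ => (ψ ξ : ℂ)) f :=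
  (fourierMultiplierCLM_apply_eq_fourierInv (hasTemperateGrowth_dilate hψ M) f).symm

lemma norm_fderiv_le_gradNorm (u : E3 → ℂ) (x : E3) : ‖fderiv ℝ u x‖ ≤ gradNorm u x := by
  refine ContinuousLinearMap.opNorm_le_bound _ (Real.sqrt_nonneg _) fun v => ?_
  have hv : fderiv ℝ u x v = ∑ i, (v i : ℂ) * pd u i x := by
    conv_lhs => rw [← (EuclideanSpace.basisFun (Fin 3) ℝ).sum_repr v]
    simp [pd, e3]
  calc ‖fderiv ℝ u x v‖ ≤ ∑ i, ‖v i‖ * ‖pd u i x‖ := by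
        rw [hv]
        exact (norm_sum_le _ _).trans_eq (by simp)
    _ ≤ √(∑ i, ‖v i‖ ^ 2) * √(∑ i, ‖pd u i x‖ ^ 2) := Real.sum_mul_le_sqrt_mul_sqrt _ _ _
    _ = gradNorm u x * ‖v‖ := by
        simp only [gradNorm, Complex.normSq_eq_norm_sq, EuclideanSpace.norm_eq, mul_comm]

lemma gradNorm_le_sqrt_three_mul_norm_fderiv (u : E3 → ℂ) (x : E3) :
    gradNorm u x ≤ √3 * ‖fderiv ℝ u x‖ := by
  have hpd (i : Fin 3) : ‖pd u i x‖ ≤ ‖fderiv ℝ u x‖ := by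
    simpa [pd, e3] using (fderiv ℝ u x).le_opNorm (e3 i)
  calc gradNorm u x ≤ √(∑ _i : Fin 3, ‖fderiv ℝ u x‖ ^ 2) := by
        simp only [gradNorm, Complex.normSq_eq_norm_sq]
        gcongr with i
        exact hpd i
    _ = √3 * ‖fderiv ℝ u x‖ := by
        rw [Fin.sum_const, nsmul_eq_mul, Real.sqrt_mul (by positivity),
          Real.sqrt_sq (norm_nonneg _), Nat.cast_ofNat]

lemma eLpNorm_gradNorm_ne_top (u : 𝓢(E3, ℂ)) (p : ℝ≥0∞) :
    eLpNorm (gradNorm u) p volume ≠ ⊤ := by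
  have hfderiv : eLpNorm (fderiv ℝ u) p volume ≠ ⊤ :=
    ((fderivCLM ℝ E3 ℂ u).memLp p volume).eLpNorm_ne_top
  refine ne_top_of_le_ne_top (ENNReal.mul_ne_top ENNReal.ofReal_ne_top hfderiv)
    (eLpNorm_le_mul_eLpNorm_of_ae_le_mul (c := √3) (ae_of_all _ fun x => ?_) p)
  rw [Real.norm_of_nonneg (by exact Real.sqrt_nonneg _)]
  exact gradNorm_le_sqrt_three_mul_norm_fderiv u x

lemma sAdmissible_ten : SAdmissible 10 (30 / 13) := by
  refine ⟨by norm_num, ?_, ?_⟩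
  · rw [ENNReal.le_div_iff_mul_le (by simp) (by simp)]
    norm_num
  · have hne : (2 * (30 / 13) : ℝ≥0∞) ≠ 0 := by simp
    rw [← ENNReal.toReal_eq_toReal_iff' (by finiteness) (by finiteness),
      ENNReal.toReal_add (by finiteness) (by finiteness)]
    norm_num

lemma LqLr_gradNorm_le_Znorm {q r : ℝ≥0∞} (hqr : SAdmissible q r) (η : ℝ → ℝ) (N T : ℝ)
    (φ : ℝ → E3 → ℂ) :
    LqLr q r T (fun t x => gradNorm (Iop η N (φ t)) x) ≤ Znorm η N T φ :=
  le_iSup₂_of_le q r (le_iSup_of_le hqr le_rfl)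

lemma exists_eLpNorm_PM_Iop_pow_three_le (hs : 1 / 2 < s) (hs1 : s ≤ 1) (hη : IsCutoff s η)
    (hψ : IsAnnularSymbol fun ξ => (ψ ξ : ℂ)) :
    ∃ C : ℝ≥0, ∀ M > 0, ∀ N > 0, ∀ f : 𝓢(E3, ℂ),
      eLpNorm (PM ψ M (Iop η N (⇑f ^ 3))) (10 / 3) volume ≤
        C * ENNReal.ofReal (1 + M / N) *
          eLpNorm (gradNorm (Iop η N f)) (30 / 13) volume ^ 3 := by
  obtain ⟨q, hq⟩ : ∃ q : ℝ≥0, (q : ℝ) = 30 / (29 - 10 * s) :=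
    ⟨⟨30 / (29 - 10 * s), div_nonneg (by norm_num) (by linarith)⟩, rfl⟩
  have hs0 : 0 < 29 - 10 * s := by linarith
  have hpq : (30 / 13 : ℝ≥0) ≤ q * 3 := by
    rw [← NNReal.coe_le_coe, NNReal.coe_mul, hq, div_mul_eq_mul_div, le_div_iff₀ hs0]
    push_cast
    linarith
  have hq1 : 1 ≤ q := by
    rw [← NNReal.coe_le_coe, hq, le_div_iff₀ hs0]
    push_cast
    linarith
  have hqr : q ≤ 10 / 3 := by
    rw [← NNReal.coe_le_coe, hq, div_le_iff₀ hs0]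
    push_cast
    linarith
  have hq' : (q : ℝ)⁻¹ = 29 / 30 - s / 3 := by
    rw [hq, inv_div]
    ring
  obtain ⟨C, hC⟩ := hη.exists_eLpNorm_smoothedProjection_pow_three_le (V := E3) hs1 hψ (by simp)
    (by rw [one_le_div] <;> norm_num) hpq hq1 hqr
    (by norm_num [finrank_euclideanSpace])
    (by rw [mul_inv, hq', finrank_euclideanSpace, Fintype.card_fin]; push_cast; linarith)
  have hexp : (Module.finrank ℝ E3 : ℝ) * ((q : ℝ)⁻¹ - ((10 / 3 : ℝ≥0) : ℝ)⁻¹) + s - 1 = 1 := by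
    rw [hq', finrank_euclideanSpace, Fintype.card_fin]
    push_cast
    ring
  refine ⟨C, fun M hM N hN f => ?_⟩
  obtain ⟨g, hg⟩ := exists_schwartzMap_coe_eq_pow f (n := 3) (by norm_num)
  rw [← hg, Iop_eq_fourierMultiplierCLM hη hN, Iop_eq_fourierMultiplierCLM hη hN,
    PM_eq_fourierMultiplierCLM hψ.hasTemperateGrowth]
  have hcube := hC M hM N hN f g hg
  rw [hexp, Real.rpow_one, ENNReal.coe_div (by norm_num), ENNReal.coe_div (by norm_num)] at hcube
  refine hcube.trans ?_
  gcongr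
  refine eLpNorm_mono_real ?_
  exact norm_fderiv_le_gradNorm _

theorem littlewood_paley_cubic_bound_general (hs : 1 / 2 < s) (hs1 : s ≤ 1) (hη : IsCutoff s η)
    (hψ : IsAnnularSymbol fun ξ => (ψ ξ : ℂ)) :
    ∃ C > (0 : ℝ), ∀ T, ∀ N > 0, ∀ M > 0, ∀ φ : ℝ → 𝓢(E3, ℂ),
      LqLr (10 / 3) (10 / 3) T (fun t x => ‖PM ψ M (Iop η N (⇑(φ t) ^ 3)) x‖) ≤
        ENNReal.ofReal (C * (1 + M / N)) * Znorm η N T (fun t => φ t) ^ 3 := by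
  obtain ⟨C, hC⟩ := exists_eLpNorm_PM_Iop_pow_three_le hs hs1 hη hψ
  refine ⟨C + 1, by positivity, fun T N hN M hM φ => ?_⟩
  have hfin (t : ℝ) : eLpNorm (gradNorm (Iop η N (φ t))) (30 / 13) volume ≠ ⊤ := by
    rw [Iop_eq_fourierMultiplierCLM hη hN]
    exact eLpNorm_gradNorm_ne_top _ _
  have hslice (t : ℝ) : ‖(eLpNorm (fun x => ‖PM ψ M (Iop η N (⇑(φ t) ^ 3)) x‖) (10 / 3)
      volume).toReal‖ₑ ≤ (C * (1 + M / N)).toNNReal *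
        ‖(eLpNorm (gradNorm (Iop η N (φ t))) (30 / 13) volume).toReal‖ₑ ^ 3 := by
    rw [enorm_toReal (hfin t), eLpNorm_norm, Real.enorm_of_nonneg ENNReal.toReal_nonneg]
    refine ENNReal.ofReal_toReal_le.trans ((hC M hM N hN (φ t)).trans_eq ?_)
    rw [← ENNReal.ofReal, ENNReal.ofReal_mul C.coe_nonneg, ENNReal.ofReal_coe_nnreal]
  calc _ ≤ ENNReal.ofReal (C * (1 + M / N)) *
          LqLr (10 / 3 * (3 : ℕ)) (30 / 13) T (fun t => gradNorm (Iop η N (φ t))) ^ 3 :=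
        eLpNorm_le_mul_eLpNorm_pow_of_enorm_le three_pos hslice _
    _ ≤ ENNReal.ofReal ((C + 1) * (1 + M / N)) * Znorm η N T (fun t => φ t) ^ 3 := by
        have h10 : (10 / 3 * (3 : ℕ) : ℝ≥0∞) = 10 := ENNReal.div_mul_cancel (by simp) (by simp)
        rw [h10]
        gcongr
        · simp
        · exact LqLr_gradNorm_le_Znorm sAdmissible_ten η N T _

end SpacetimeEstimate

/-- Fix `s ∈ (1/2, 1)`, a cutoff `η` for `I_N`, and a smooth `ψ` with
values in `[0,1]` supported in the annulus `{1/2 ≤ |ξ| ≤ 2}` defining the projections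
`P_M`.  Then there is `C > 0` such that for every `T > 0`, `N ≥ 1`, `M ≥ 1` and every
smooth decaying solution `φ` of the cubic defocusing NLS on `[0,T] × ℝ³`,
`‖P_M(I_N(φ³))‖_{L^{10/3}_{x,t}} ≤ C M Z³`, where
`Z = sup_{(q,r) admissible} ‖∇ I_N φ‖_{L^q_t L^r_x([0,T] × ℝ³)}`. -/
theorem littlewood_paley_cubic_bound
    (s : ℝ) (hs : 1/2 < s) (hs1 : s < 1) (η : ℝ → ℝ) (hη : IsCutoff s η)
    (ψ : E3 → ℝ) (hψsm : ContDiff ℝ ∞ ψ) (hψ01 : ∀ ξ : E3, ψ ξ ∈ Set.Icc (0:ℝ) 1)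
    (hψsupp : Function.support ψ ⊆ {ξ : E3 | 1/2 ≤ ‖ξ‖ ∧ ‖ξ‖ ≤ 2}) :
    ∃ C > (0:ℝ), ∀ T > (0:ℝ), ∀ N ≥ (1:ℝ), ∀ M ≥ (1:ℝ),
      ∀ φ : ℝ → E3 → ℂ, IsSolution 1 1 (fun z => z) T φ →
      LqLr (10/3) (10/3) T
          (fun t x => ‖PM ψ M (Iop η N (fun z => (φ t z) ^ 3)) x‖)
        ≤ ENNReal.ofReal (C * M) * (Znorm η N T φ) ^ 3 := by
  have hψ : IsAnnularSymbol fun ξ => (ψ ξ : ℂ) :=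
    .of_support_subset (Complex.ofRealCLM.contDiff.comp hψsm) one_half_pos <| by
      simpa only [Function.support, Ne, Complex.ofReal_eq_zero] using hψsupp
  obtain ⟨C, hC, hbound⟩ := littlewood_paley_cubic_bound_general hs hs1.le hη hψ
  refine ⟨2 * C, by positivity, fun T _ N hN M hM φ hφ => ?_⟩
  choose f hf using hφ.schwartz 0
  obtain rfl : φ = fun t => ⇑(f t) := funext₂ fun t x => by simpa using hf t x
  refine (hbound T N (by positivity) M (by positivity) f).trans ?_
  gcongr ENNReal.ofReal ?_ * _
  calc C * (1 + M / N) ≤ C * (M + M) := by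
        gcongr
        exact div_le_self (by positivity) hN
    _ = 2 * C * M := by ring
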